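/- Central limit theorem for Betti numbers: fix integers 0 ≤ q < d and t ∈ [0,1]. Assume P is a stationary product probability measure on Ω = [0,1]^{K^d}. Then there exists a constant σ² ≥ 0, depending on d, q and t, such that as n → ∞: (i) |Λ_n|^{−1} E[(β_q^n(t) − E[β_q^n(t)])²] → σ², and (ii) |Λ_n|^{−1/2} (β_q^n(t) − E[β_q^n(t)]) converges in distribution to the Gaussian law N(0,σ²). -/

import Mathlib

open MeasureTheory Filter Topology

noncomputable section

/-- An elementary cube in `ℝ^d`: the `i`-th component is the elementary interval
`[l, l+1]` if the Boolean is `true` (nondegenerate) and `[l, l]` if `false` (degenerate). -/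
abbrev ElemCube (d : ℕ) := Fin d → ℤ × Bool

/-- The dimension of an elementary cube: the number of nondegenerate components. -/
def cubeDim {d : ℕ} (Q : ElemCube d) : ℕ :=
  (Finset.univ.filter fun i => (Q i).2 = true).card

/-- The geometric realization of an elementary cube as a subset of `ℝ^d`. -/
def cubeSet {d : ℕ} (Q : ElemCube d) : Set (Fin d → ℝ) :=
  {x | ∀ i, x i ∈ Set.Icc ((Q i).1 : ℝ) ((Q i).1 + (if (Q i).2 then 1 else 0))}

/-- A cubical set is a union of elementary cubes. -/
def IsCubical {d : ℕ} (X : Set (Fin d → ℝ)) : Prop :=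
  ∃ S : Set (ElemCube d), X = ⋃ Q ∈ S, cubeSet Q

/-- The free `ℤ`-module generated by all elementary cubes of `ℝ^d` (all dimensions mixed). -/
abbrev CubChain (d : ℕ) := ElemCube d →₀ ℤ

/-- The cubical boundary of a single elementary cube, defined by induction on the ambient
dimension, following the inductive definition: in `ℝ¹`, `∂ [l,l+1]^ = [l+1]^ - [l]^` and
`∂ Q̂ = 0` for degenerate `Q`; and for `Q = I × P`,
`∂ Q̂ = (∂ Î) ⋄ P̂ + (-1)^(dim I) Î ⋄ (∂ P̂)`, where `⋄` is the cubical product. -/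
def boundaryCube : (d : ℕ) → ElemCube d → CubChain d
  | 0, _ => 0
  | d + 1, Q =>
      (if (Q 0).2 then
          Finsupp.single (Fin.cons ((Q 0).1 + 1, false) (fun i => Q i.succ)) (1 : ℤ)
            - Finsupp.single (Fin.cons ((Q 0).1, false) (fun i => Q i.succ)) (1 : ℤ)
        else 0)
      + (if (Q 0).2 then (-1 : ℤ) else 1) •
          (boundaryCube d (fun i => Q i.succ)).sum
            (fun R n => Finsupp.single (Fin.cons (Q 0) R) n)

/-- The cubical boundary operator, the `ℤ`-linear extension of `boundaryCube`. -/
def boundaryHom (d : ℕ) : CubChain d →ₗ[ℤ] CubChain d :=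
  Finsupp.lsum ℤ fun Q => LinearMap.toSpanSingleton ℤ (CubChain d) (boundaryCube d Q)

/-- `C_k^d(X)`: the submodule of chains supported on the `k`-dimensional elementary cubes
contained in `X`. -/
def chainsOn (d k : ℕ) (X : Set (Fin d → ℝ)) : Submodule ℤ (CubChain d) :=
  Finsupp.supported ℤ ℤ {Q : ElemCube d | cubeDim Q = k ∧ cubeSet Q ⊆ X}

/-- `Z_q(X) = ker ∂_q^X`, the cycles of the cubical set `X` in degree `q`. -/
def cycleMod (d q : ℕ) (X : Set (Fin d → ℝ)) : Submodule ℤ (CubChain d) :=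
  chainsOn d q X ⊓ LinearMap.ker (boundaryHom d)

/-- `B_q(X) = im ∂_{q+1}^X`, the boundaries of the cubical set `X` in degree `q`. -/
def boundaryMod (d q : ℕ) (X : Set (Fin d → ℝ)) : Submodule ℤ (CubChain d) :=
  Submodule.map (boundaryHom d) (chainsOn d (q + 1) X)

/-- The `q`-th Betti number of a cubical set: the rank of the free part of the `q`-th
cubical homology `H_q(X) = Z_q(X) / B_q(X)`. -/
def betti (d q : ℕ) (X : Set (Fin d → ℝ)) : ℕ :=
  Module.finrank ℤ
    (↥(cycleMod d q X) ⧸ (boundaryMod d q X).comap (cycleMod d q X).subtype)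

/-- `Λ_n = [-n, n]^d ⊆ ℝ^d`. -/
def lambda (d n : ℕ) : Set (Fin d → ℝ) := {x | ∀ i, x i ∈ Set.Icc (-(n : ℝ)) n}

/-- The configuration space `Ω = [0,1]^{K^d}` with the product σ-field. -/
abbrev Config (d : ℕ) := ElemCube d → unitInterval

/-- Translation of an elementary cube by `x ∈ ℤ^d`. -/
def translateCube {d : ℕ} (x : Fin d → ℤ) (Q : ElemCube d) : ElemCube d :=
  fun i => ((Q i).1 + x i, (Q i).2)

/-- The translation action `τ_x` on configurations: `(τ_x ω)_Q = ω_{-x+Q}`. -/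
def configShift {d : ℕ} (x : Fin d → ℤ) (ω : Config d) : Config d :=
  fun Q => ω (translateCube (-x) Q)

/-- Stationarity of a measure on configuration space: `P(τ_x⁻¹ A) = P(A)`. -/
def Stationary {d : ℕ} (P : Measure (Config d)) : Prop :=
  ∀ (x : Fin d → ℤ) (A : Set (Config d)), MeasurableSet A → P (configShift x ⁻¹' A) = P A

/-- Ergodicity of a measure on configuration space under translations. -/
def ErgodicConfig {d : ℕ} (P : Measure (Config d)) : Prop :=
  ∀ A : Set (Config d), MeasurableSet A →
    (∀ x : Fin d → ℤ, configShift x ⁻¹' A = A) → P A = 0 ∨ P A = 1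

/-- The random cubical set `X(t) = ⋃ {Q ∈ K^d : ω_Q ≤ t}`. -/
def cubSet {d : ℕ} (ω : Config d) (t : ℝ) : Set (Fin d → ℝ) :=
  ⋃ Q ∈ {Q : ElemCube d | (ω Q : ℝ) ≤ t}, cubeSet Q

/-- `β_q^n(t)(ω) = β_q(X(t) ∩ Λ_n)`. -/
def bettiN (d q n : ℕ) (t : ℝ) (ω : Config d) : ℕ :=
  betti d q (cubSet ω t ∩ lambda d n)

/-- `β̂_q(t) := limsup_{n → ∞} |Λ_n|⁻¹ E[β_q^n(t)]`, where `|Λ_n| = (2n)^d`. -/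
def betaHat (d q : ℕ) (P : Measure (Config d)) (t : ℝ) : ℝ :=
  limsup (fun n : ℕ => ((2 * (n : ℝ)) ^ d)⁻¹ * ∫ ω, (bettiN d q n t ω : ℝ) ∂P) atTop

/-!
Let `Φ_W` be the `q`-th Betti number of the part of the complex inside a window `W`, as a function
of the set of open cubes. Counting ranks gives
`Φ_W = #q-cells - rank ∂_q - rank ∂_{q+1}`,
and the rank of a family of vectors is submodular, so `Φ_W` is supermodular. Hence the discrete
derivative of `Φ_W` at a cube, that is, the effect of opening that cube, is bounded and increases
with `W`; its mean therefore converges as `W` exhausts `ℝ^d`. Monotonicity turns this convergence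
of means into `L¹`-closeness of the derivatives for all large windows.

Cut `Λ_n` into blocks of a large fixed radius `r`, separated by gaps of width two. The difference
of `Φ_{Λ_n}` and the sum of the block functionals has small discrete derivative at every cube well
inside a block, so by the Efron–Stein inequality its variance is at most `ε |Λ_n|`, with `ε → 0` as
`r → ∞`. The block functionals are i.i.d., so their normalised sums satisfy the central limit
theorem, and the set of Gaussian limits is closed under this `L²` approximation.
-/

open ProbabilityTheory

/-! ### Functionals of an independent random set -/

section RandomSet

variable {ι β γ δ : Type*} {K L : Set ι} {i j : ι}

/-- `f A` only depends on `A ∩ K`: the analogue of `DependsOn` for functions of a set. -/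
def DeterminedBy (f : Set ι → β) (K : Set ι) : Prop :=
  ∀ ⦃A B : Set ι⦄, A ∩ K = B ∩ K → f A = f B

/-- The discrete derivative of `f` in the direction `i`, the change of `f A` when `i` is switched
from absent to present. -/
def discreteDeriv (f : Set ι → ℝ) (i : ι) (A : Set ι) : ℝ :=
  f (insert i A) - f (A \ {i})

/-- The average of `f` over the state of `i`, present with probability `p`. -/
def averageOut (p : ℝ) (f : Set ι → ℝ) (i : ι) (A : Set ι) : ℝ :=
  p * f (insert i A) + (1 - p) * f (A \ {i})

namespace DeterminedBy

lemma mono {f : Set ι → β} (hf : DeterminedBy f K) (hKL : K ⊆ L) : DeterminedBy f L :=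
  fun A B h => hf <| by
    rw [← Set.inter_eq_right.2 hKL, ← Set.inter_assoc, h, Set.inter_assoc]

lemma comp {f : Set ι → β} (hf : DeterminedBy f K) (g : β → γ) :
    DeterminedBy (fun A => g (f A)) K :=
  fun _ _ h => congrArg g (hf h)

lemma comp₂ {f : Set ι → β} {f' : Set ι → γ} (hf : DeterminedBy f K) (hf' : DeterminedBy f' K)
    (g : β → γ → δ) : DeterminedBy (fun A => g (f A) (f' A)) K :=
  fun _ _ h => congrArg₂ g (hf h) (hf' h)

lemma finset_sum {κ : Type*} [AddCommMonoid β] {s : Finset κ} {f : κ → Set ι → β}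
    (hf : ∀ k ∈ s, DeterminedBy (f k) K) : DeterminedBy (fun A => ∑ k ∈ s, f k A) K :=
  fun _ _ h => Finset.sum_congr rfl fun k hk => hf k hk h

lemma insert_left {f : Set ι → β} (hf : DeterminedBy f K) (i : ι) :
    DeterminedBy (fun A => f (insert i A)) (K \ {i}) :=
  fun A B h => hf <| by
    ext j
    have hj := Set.ext_iff.1 h j
    grind

lemma sdiff_singleton {f : Set ι → β} (hf : DeterminedBy f K) (i : ι) :
    DeterminedBy (fun A => f (A \ {i})) (K \ {i}) :=
  fun A B h => hf <| by
    ext j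
    have hj := Set.ext_iff.1 h j
    grind

lemma discreteDeriv {f : Set ι → ℝ} (hf : DeterminedBy f K) (i : ι) :
    DeterminedBy (discreteDeriv f i) (K \ {i}) :=
  (hf.insert_left i).comp₂ (hf.sdiff_singleton i) fun a b => a - b

lemma discreteDeriv_eq_zero {f : Set ι → ℝ} (hf : DeterminedBy f K) (hi : i ∉ K) (A : Set ι) :
    _root_.discreteDeriv f i A = 0 :=
  sub_eq_zero.2 <| hf <| by
    rw [Set.insert_inter_of_notMem hi, Set.sdiff_inter_right_comm, Set.sdiff_singleton_eq_self
      fun h => hi h.2]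

lemma averageOut {f : Set ι → ℝ} (hf : DeterminedBy f K) (p : ℝ) (i : ι) :
    DeterminedBy (averageOut p f i) (K \ {i}) :=
  (hf.insert_left i).comp₂ (hf.sdiff_singleton i) fun a b => p * a + (1 - p) * b

lemma exists_eq_comp_mem {f : Set ι → β} (hf : DeterminedBy f K) :
    ∃ g : (K → Prop) → β, f = g ∘ fun A (i : K) => (i : ι) ∈ A := by
  refine ⟨fun p => f (Subtype.val '' {i | p i}), funext fun A => hf ?_⟩
  ext i
  simp

variable {K : Finset ι}

lemma measurable [MeasurableSpace β] {f : Set ι → β} (hf : DeterminedBy f (K : Set ι)) :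
    Measurable f := by
  obtain ⟨g, rfl⟩ := hf.exists_eq_comp_mem
  exact Measurable.of_discrete.comp (measurable_pi_lambda _ fun i => measurable_set_mem (i : ι))

lemma finite_range {f : Set ι → β} (hf : DeterminedBy f (K : Set ι)) : (Set.range f).Finite := by
  obtain ⟨g, rfl⟩ := hf.exists_eq_comp_mem
  exact (Set.finite_range g).subset (Set.range_comp_subset_range _ _)

variable {μ : Measure (Set ι)} {f : Set ι → ℝ}

lemma memLp [IsFiniteMeasure μ] (hf : DeterminedBy f (K : Set ι)) (p : ENNReal) :
    MemLp f p μ := by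
  obtain ⟨C, hC⟩ := (hf.comp fun x => ‖x‖).finite_range.bddAbove
  exact MemLp.of_bound hf.measurable.aestronglyMeasurable C
    (Eventually.of_forall fun A => hC ⟨A, rfl⟩)

lemma integrable [IsFiniteMeasure μ] (hf : DeterminedBy f (K : Set ι)) : Integrable f μ :=
  memLp_one_iff_integrable.1 (hf.memLp 1)

lemma indepFun [MeasurableSpace β] [MeasurableSpace γ] {g : Set ι → β} {h : Set ι → γ}
    {L : Finset ι} (hμ : iIndepFun (fun i (A : Set ι) => i ∈ A) μ)
    (hg : DeterminedBy g (K : Set ι)) (hh : DeterminedBy h (L : Set ι)) (hKL : Disjoint K L) :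
    IndepFun g h μ := by
  obtain ⟨g, rfl⟩ := hg.exists_eq_comp_mem
  obtain ⟨h, rfl⟩ := hh.exists_eq_comp_mem
  exact (hμ.indepFun_finset K L hKL measurable_set_mem).comp
    Measurable.of_discrete Measurable.of_discrete

lemma iIndepFun {κ : Type*} [MeasurableSpace β] {g : κ → Set ι → β} {L : κ → Finset ι}
    (hμ : iIndepFun (fun i (A : Set ι) => i ∈ A) μ)
    (hg : ∀ k, DeterminedBy (g k) (L k : Set ι)) (hL : Pairwise (Function.onFun Disjoint L)) :
    iIndepFun g μ := by
  classical
  have := hμ.isProbabilityMeasure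
  refine iIndepFun_iff_measure_inter_preimage_eq_mul.2 fun s B hB => ?_
  induction s using Finset.induction_on with
  | empty => simp
  | insert k s hk ih =>
    have hrest : DeterminedBy (fun A => ∀ l ∈ s, g l A ∈ B l) (s.biUnion L : Set ι) :=
      fun A A' h => propext <| forall₂_congr fun l hl => by
        rw [(hg l).mono (Finset.coe_subset.2 (Finset.subset_biUnion_of_mem L hl)) h]
    have hdisj : Disjoint (L k) (s.biUnion L) :=
      (Finset.disjoint_biUnion_right _ _ _).2 fun l hl => hL (ne_of_mem_of_not_mem hl hk).symm
    have hmul := ((hg k).indepFun hμ hrest hdisj).measure_inter_preimage_eq_mul _ {True}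
      (hB k (Finset.mem_insert_self k s)) (measurableSet_singleton _)
    have hinter : ⋂ l ∈ s, g l ⁻¹' B l = (fun A => ∀ l ∈ s, g l A ∈ B l) ⁻¹' {True} := by
      ext A
      simp
    rw [Finset.prod_insert hk, ← ih fun l hl => hB l (Finset.mem_insert_of_mem hl), hinter, ← hmul,
      ← hinter, Finset.set_biInter_insert]

end DeterminedBy

section EfronStein

variable {f : Set ι → ℝ} {p : ℝ}

lemma averageOut_sq_le (hp : p ∈ Set.Icc 0 1) (A : Set ι) :
    averageOut p f i A ^ 2 ≤ averageOut p (fun B => f B ^ 2) i A := by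
  have h := mul_nonneg (mul_nonneg hp.1 (sub_nonneg.2 hp.2)) (sq_nonneg (discreteDeriv f i A))
  simp only [averageOut, discreteDeriv] at h ⊢
  linarith

lemma averageOut_sq_le_add_discreteDeriv_sq (A : Set ι) :
    averageOut p (fun B => f B ^ 2) i A ≤ averageOut p f i A ^ 2 + discreteDeriv f i A ^ 2 := by
  have hp : 0 ≤ 1 - p * (1 - p) := by nlinarith [sq_nonneg (2 * p - 1)]
  have h := mul_nonneg hp (sq_nonneg (discreteDeriv f i A))
  simp only [averageOut, discreteDeriv] at h ⊢
  linarith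

lemma discreteDeriv_averageOut (hij : i ≠ j) :
    discreteDeriv (averageOut p f i) j = averageOut p (discreteDeriv f j) i := by
  funext A
  simp only [discreteDeriv, averageOut, Set.insert_comm j i A, Set.sdiff_sdiff_comm (s := A),
    Set.insert_sdiff_singleton_comm hij, Set.insert_sdiff_singleton_comm hij.symm]
  ring

variable {K : Finset ι} {μ : Measure (Set ι)}

lemma integral_eq_integral_averageOut (hμ : iIndepFun (fun i (A : Set ι) => i ∈ A) μ)
    (hf : DeterminedBy f (K : Set ι)) (i : ι) :
    ∫ A, f A ∂μ = ∫ A, averageOut (μ.real {A | i ∈ A}) f i A ∂μ := by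
  classical
  have := hμ.isProbabilityMeasure
  let mem : Set ι → ℝ := {A : Set ι | i ∈ A}.indicator 1
  have hmem : DeterminedBy mem (({i} : Finset ι) : Set ι) := fun A B h => by
    have hi : i ∈ A ↔ i ∈ B := by simpa using Set.ext_iff.1 h i
    simp [mem, Set.indicator_apply, hi]
  have herase : DeterminedBy (fun A => f (A \ {i})) (K.erase i : Set ι) := by
    simpa only [Finset.coe_erase] using hf.sdiff_singleton i
  have hderiv : DeterminedBy (discreteDeriv f i) (K.erase i : Set ι) := by
    simpa only [Finset.coe_erase] using hf.discreteDeriv i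
  have hindep := hmem.indepFun hμ hderiv (by simp)
  have hmul : Integrable (fun A => mem A * discreteDeriv f i A) μ :=
    hindep.integrable_mul hmem.integrable hderiv.integrable
  have hmem_int : ∫ A, mem A ∂μ = μ.real {A | i ∈ A} :=
    integral_indicator_one (measurableSet_setOfPred.2 (measurable_set_mem i))
  have hsplit : ∀ A, f A = f (A \ {i}) + mem A * discreteDeriv f i A := fun A => by
    by_cases hA : i ∈ A <;> simp [mem, hA, discreteDeriv]
  have haverage : ∀ A, averageOut (μ.real {A | i ∈ A}) f i A =
      f (A \ {i}) + μ.real {A | i ∈ A} * discreteDeriv f i A := fun A => by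
    simp only [averageOut, discreteDeriv]
    ring
  simp_rw [haverage]
  rw [integral_congr_ae (Eventually.of_forall hsplit), integral_add herase.integrable hmul,
    integral_add herase.integrable (hderiv.integrable.const_mul _), integral_const_mul, ← hmem_int]
  congr 1
  exact hindep.integral_mul_eq_mul_integral hmem.integrable.aestronglyMeasurable
    hderiv.integrable.aestronglyMeasurable

lemma variance_le_variance_averageOut_add (hμ : iIndepFun (fun i (A : Set ι) => i ∈ A) μ)
    (hf : DeterminedBy f (K : Set ι)) (i : ι) :
    Var[f; μ] ≤ Var[averageOut (μ.real {A | i ∈ A}) f i; μ] +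
      ∫ A, discreteDeriv f i A ^ 2 ∂μ := by
  have := hμ.isProbabilityMeasure
  set p := μ.real {A | i ∈ A}
  have haverage := (hf.averageOut p i).mono Set.sdiff_subset
  have hderiv := (hf.discreteDeriv i).mono Set.sdiff_subset
  have hsq : ∫ A, f A ^ 2 ∂μ ≤
      ∫ A, averageOut p f i A ^ 2 ∂μ + ∫ A, discreteDeriv f i A ^ 2 ∂μ := by
    rw [integral_eq_integral_averageOut hμ (hf.comp fun x => x ^ 2) i,
      ← integral_add (haverage.comp fun x => x ^ 2).integrable
        (hderiv.comp fun x => x ^ 2).integrable]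
    exact integral_mono
      (((hf.comp fun x => x ^ 2).averageOut p i).mono Set.sdiff_subset).integrable
      (haverage.comp₂ hderiv fun a b => a ^ 2 + b ^ 2).integrable
      averageOut_sq_le_add_discreteDeriv_sq
  rw [variance_eq_sub (hf.memLp 2), variance_eq_sub (haverage.memLp 2),
    integral_eq_integral_averageOut hμ hf i]
  simp only [Pi.pow_apply]
  linarith

lemma integral_discreteDeriv_averageOut_sq_le (hμ : iIndepFun (fun i (A : Set ι) => i ∈ A) μ)
    (hf : DeterminedBy f (K : Set ι)) (hij : i ≠ j) :
    ∫ A, discreteDeriv (averageOut (μ.real {A | i ∈ A}) f i) j A ^ 2 ∂μ ≤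
      ∫ A, discreteDeriv f j A ^ 2 ∂μ := by
  have := hμ.isProbabilityMeasure
  have hderiv := (hf.discreteDeriv j).mono Set.sdiff_subset
  rw [discreteDeriv_averageOut hij,
    integral_eq_integral_averageOut hμ (hderiv.comp fun x => x ^ 2) i]
  exact integral_mono
    (((hderiv.averageOut _ i).mono Set.sdiff_subset).comp fun x => x ^ 2).integrable
    (((hderiv.comp fun x => x ^ 2).averageOut _ i).mono Set.sdiff_subset).integrable
    (averageOut_sq_le ⟨measureReal_nonneg, measureReal_le_one⟩)

/-- The **Efron–Stein inequality**: the elements of `K` are averaged out one at a time. -/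
theorem variance_le_sum_integral_discreteDeriv_sq
    (hμ : iIndepFun (fun i (A : Set ι) => i ∈ A) μ) (hf : DeterminedBy f (K : Set ι)) :
    Var[f; μ] ≤ ∑ i ∈ K, ∫ A, discreteDeriv f i A ^ 2 ∂μ := by
  classical
  have := hμ.isProbabilityMeasure
  induction K using Finset.induction_on generalizing f with
  | empty =>
    have hconst : f = fun _ => f ∅ := funext fun A => hf (by simp)
    rw [hconst, variance_eq_sub (memLp_const _)]
    simp
  | insert i K hi ih =>
    have haverage : DeterminedBy (averageOut (μ.real {A | i ∈ A}) f i) (K : Set ι) := by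
      simpa [hi] using hf.averageOut (μ.real {A | i ∈ A}) i
    calc Var[f; μ]
        ≤ Var[averageOut (μ.real {A | i ∈ A}) f i; μ] + ∫ A, discreteDeriv f i A ^ 2 ∂μ :=
          variance_le_variance_averageOut_add hμ hf i
      _ ≤ ∑ j ∈ K, ∫ A, discreteDeriv (averageOut (μ.real {A | i ∈ A}) f i) j A ^ 2 ∂μ +
            ∫ A, discreteDeriv f i A ^ 2 ∂μ := by
          gcongr
          exact ih haverage
      _ ≤ ∑ j ∈ K, ∫ A, discreteDeriv f j A ^ 2 ∂μ + ∫ A, discreteDeriv f i A ^ 2 ∂μ := by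
          gcongr ?_ + _
          refine Finset.sum_le_sum fun j hj => ?_
          exact integral_discreteDeriv_averageOut_sq_le hμ hf (ne_of_mem_of_not_mem hj hi).symm
      _ = ∑ j ∈ insert i K, ∫ A, discreteDeriv f j A ^ 2 ∂μ := by
          rw [Finset.sum_insert hi, add_comm]

end EfronStein

end RandomSet

/-! ### Gaussian limits -/

section GaussianLimit

open Asymptotics
open scoped NNReal

lemma norm_pow_sub_pow_le {R : Type*} [NormedCommRing R] [NormOneClass R] {a b : R}
    (ha : ‖a‖ ≤ 1) (hb : ‖b‖ ≤ 1) (k : ℕ) : ‖a ^ k - b ^ k‖ ≤ k * ‖a - b‖ := by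
  rw [← geom_sum₂_mul]
  refine (norm_mul_le _ _).trans (mul_le_mul_of_nonneg_right ?_ (norm_nonneg _))
  calc ‖∑ i ∈ Finset.range k, a ^ i * b ^ (k - 1 - i)‖
      ≤ ∑ i ∈ Finset.range k, ‖a ^ i * b ^ (k - 1 - i)‖ := norm_sum_le _ _
    _ ≤ ∑ _i ∈ Finset.range k, (1 : ℝ) := Finset.sum_le_sum fun i _ =>
        (norm_mul_le _ _).trans <| mul_le_one₀
          ((norm_pow_le _ _).trans (pow_le_one₀ (norm_nonneg _) ha)) (norm_nonneg _)
          ((norm_pow_le _ _).trans (pow_le_one₀ (norm_nonneg _) hb))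
    _ = k := by simp

lemma isLittleO_charFun_sub_one_sub_variance {ν : Measure ℝ} [IsProbabilityMeasure ν]
    (hν : MemLp id 2 ν) (hmean : ∫ x, x ∂ν = 0) :
    (fun s : ℝ => charFun ν s - (1 - Var[id; ν] * s ^ 2 / 2)) =o[𝓝 0] fun s => s ^ 2 := by
  have htaylor (s : ℝ) : taylorWithinEval (charFun ν) 2 Set.univ 0 s =
      1 - Var[id; ν] * s ^ 2 / 2 := by
    have h := taylorWithinEval_charFun_two_zero (P := ν) aemeasurable_id (by rwa [Measure.map_id]) s
    rw [Measure.map_id] at h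
    rw [h, variance_of_integral_eq_zero aemeasurable_id hmean]
    simp [hmean]
  simp_rw [← htaylor]
  simpa only [sub_zero] using
    taylor_isLittleO_univ (x₀ := 0) (contDiff_charFun (by exact_mod_cast hν))

lemma tendsto_charFun_pow {ν : Measure ℝ} [IsProbabilityMeasure ν] (hν : MemLp id 2 ν)
    (hmean : ∫ x, x ∂ν = 0) {s : ℕ → ℝ} {k : ℕ → ℕ} {c : ℝ} (hs : Tendsto s atTop (𝓝 0))
    (hks : Tendsto (fun n => k n * s n ^ 2) atTop (𝓝 c)) :
    Tendsto (fun n => charFun ν (s n) ^ k n) atTop (𝓝 (Complex.exp (-(Var[id; ν] * c / 2)))) := by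
  set v : ℝ≥0 := ⟨Var[id; ν], variance_nonneg _ _⟩
  set γ := gaussianReal 0 v
  have hdiff : (fun r : ℝ => charFun ν r - charFun γ r) =o[𝓝 0] fun r => r ^ 2 := by
    have hγ := isLittleO_charFun_sub_one_sub_variance (memLp_id_gaussianReal' (μ := 0) (v := v) 2
      (by simp)) integral_id_gaussianReal
    rw [variance_id_gaussianReal] at hγ
    exact ((isLittleO_charFun_sub_one_sub_variance hν hmean).sub hγ).congr_left fun r =>
      sub_sub_sub_cancel_right _ _ _
  have hgauss : Tendsto (fun n => charFun γ (s n) ^ k n) atTop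
      (𝓝 (Complex.exp (-(Var[id; ν] * c / 2)))) := by
    have hexp : ∀ n, charFun γ (s n) ^ k n =
        Complex.exp (-(Var[id; ν] * ((k n * s n ^ 2 : ℝ) : ℂ) / 2)) := fun n => by
      rw [charFun_gaussianReal, ← Complex.exp_nat_mul]
      congr 1
      push_cast
      rw [show ((v : ℝ) : ℂ) = (Var[id; ν] : ℂ) from rfl]
      ring
    simp_rw [hexp]
    exact Complex.continuous_exp.continuousAt.tendsto.comp
      (((Complex.continuous_ofReal.tendsto _).comp hks).const_mul _ |>.div_const _ |>.neg)
  have hzero : Tendsto (fun n => charFun ν (s n) ^ k n - charFun γ (s n) ^ k n) atTop (𝓝 0) := by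
    have hsmall : (fun n => (k n : ℝ) * ‖charFun ν (s n) - charFun γ (s n)‖) =o[atTop]
        fun n => (k n : ℝ) * s n ^ 2 :=
      (isBigO_refl _ _).mul_isLittleO (hdiff.comp_tendsto hs).norm_left
    exact squeeze_zero_norm
      (fun n => norm_pow_sub_pow_le (norm_charFun_le_one _) (norm_charFun_le_one _) _)
      ((isLittleO_one_iff ℝ).1 (hsmall.trans_isBigO (hks.isBigO_one ℝ)))
  simpa using hzero.add hgauss

lemma exists_tendsto_of_forall_eventually_dist_lt {α : Type*} [MetricSpace α] [CompleteSpace α]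
    {F : Set α} (hF : IsClosed F) {u : ℕ → α}
    (h : ∀ ε > 0, ∃ l ∈ F, ∀ᶠ n in atTop, dist (u n) l < ε) :
    ∃ l ∈ F, Tendsto u atTop (𝓝 l) := by
  have hcauchy : CauchySeq u := Metric.cauchySeq_iff'.2 fun ε hε => by
    obtain ⟨l, -, hl⟩ := h (ε / 2) (half_pos hε)
    obtain ⟨N, hN⟩ := eventually_atTop.1 hl
    exact ⟨N, fun n hn => (dist_triangle_right _ _ l).trans_lt
      (by linarith [hN n hn, hN N le_rfl])⟩
  obtain ⟨m, hm⟩ := cauchySeq_tendsto_of_complete hcauchy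
  refine ⟨m, hF.closure_subset <| Metric.mem_closure_iff.2 fun ε hε => ?_, hm⟩
  obtain ⟨l, hlF, hl⟩ := h (ε / 2) (half_pos hε)
  have hle : dist m l ≤ ε / 2 :=
    le_of_tendsto (hm.dist tendsto_const_nhds) (hl.mono fun n hn => hn.le)
  exact ⟨l, hlF, by linarith⟩

variable {Ω : Type*} [MeasurableSpace Ω] {μ : Measure Ω}

/-- The variances of `Y n` converge to `v`, and the centred variables `Y n - E[Y n]` converge in
distribution to `N(0, v)`, the latter expressed through characteristic functions. -/
structure HasGaussianLimit (Y : ℕ → Ω → ℝ) (μ : Measure Ω) (v : ℝ≥0) : Prop where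
  memLp : ∀ n, MemLp (Y n) 2 μ
  tendsto_variance : Tendsto (fun n => Var[Y n; μ]) atTop (𝓝 v)
  tendsto_charFun : ∀ θ, Tendsto (fun n => charFun (μ.map fun ω => Y n ω - μ[Y n]) θ) atTop
    (𝓝 (charFun (gaussianReal 0 v) θ))

/-- The standard deviation of `X` paired with the characteristic function at `θ` of the centred
variable `X - E[X]`. -/
def sdCharFun (μ : Measure Ω) (θ : ℝ) (X : Ω → ℝ) : ℝ × ℂ :=
  (√Var[X; μ], charFun (μ.map fun ω => X ω - μ[X]) θ)

/-- The pairs formed by a number `s` and the characteristic function at `θ` of `N(0, s²)`. -/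
def gaussianCurve (θ : ℝ) : Set (ℝ × ℂ) :=
  {p | p.2 = charFun (gaussianReal 0 (p.1 ^ 2).toNNReal) θ}

lemma isClosed_gaussianCurve (θ : ℝ) : IsClosed (gaussianCurve θ) := by
  unfold gaussianCurve
  simp only [charFun_gaussianReal, Real.coe_toNNReal _ (sq_nonneg _)]
  exact isClosed_eq continuous_snd (by fun_prop)

lemma HasGaussianLimit.exists_tendsto_sdCharFun {Y : ℕ → Ω → ℝ} {v : ℝ≥0}
    (hY : HasGaussianLimit Y μ v) (θ : ℝ) :
    ∃ l ∈ gaussianCurve θ, Tendsto (fun n => sdCharFun μ θ (Y n)) atTop (𝓝 l) := by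
  refine ⟨(√v, charFun (gaussianReal 0 v) θ), ?_,
    hY.tendsto_variance.sqrt.prodMk_nhds (hY.tendsto_charFun θ)⟩
  simp only [gaussianCurve, Set.mem_ofPred_eq, Real.sq_sqrt v.coe_nonneg, Real.toNNReal_coe]

lemma variance_const_mul_sum {κ : Type*} [Fintype κ] {X : κ → Ω → ℝ} {X₀ : Ω → ℝ}
    (hX₀ : MemLp X₀ 2 μ) (hident : ∀ k, IdentDistrib (X k) X₀ μ μ) (hindep : iIndepFun X μ)
    (a : ℝ) : Var[fun ω => a * ∑ k, X k ω; μ] = Fintype.card κ * a ^ 2 * Var[X₀; μ] := by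
  have hsum : Var[fun ω => ∑ k, X k ω; μ] = Fintype.card κ * Var[X₀; μ] := by
    simp_rw [← Finset.sum_apply]
    rw [IndepFun.variance_sum (fun k _ => (hident k).symm.memLp_snd hX₀)
      fun k _ l _ hkl => hindep.indepFun hkl]
    simp [fun k => (hident k).variance_eq]
  rw [variance_const_mul, hsum]
  ring

lemma charFun_map_centered_const_mul_sum {κ : Type*} [Fintype κ] {X : κ → Ω → ℝ} {X₀ : Ω → ℝ}
    (hX₀ : Integrable X₀ μ) (hident : ∀ k, IdentDistrib (X k) X₀ μ μ) (hindep : iIndepFun X μ)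
    (a θ : ℝ) :
    charFun (μ.map fun ω => a * ∑ k, X k ω - ∫ ω', a * ∑ k, X k ω' ∂μ) θ =
      charFun (μ.map fun ω => X₀ ω - μ[X₀]) (a * θ) ^ Fintype.card κ := by
  have hident' k : IdentDistrib (fun ω => X k ω - μ[X₀]) (fun ω => X₀ ω - μ[X₀]) μ μ :=
    (hident k).comp (measurable_id.sub_const _)
  have hindep' : iIndepFun (fun k ω => X k ω - μ[X₀]) μ :=
    hindep.comp (fun _ (x : ℝ) => x - ∫ ω, X₀ ω ∂μ) fun _ => measurable_id.sub_const _
  have hcenter : (fun ω => a * ∑ k, X k ω - ∫ ω', a * ∑ k, X k ω' ∂μ) =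
      fun ω => a * ∑ k, (X k ω - μ[X₀]) := by
    ext ω
    rw [integral_const_mul, integral_finsetSum _ fun k _ => (hident k).symm.integrable_snd hX₀,
      Finset.sum_sub_distrib, mul_sub]
    simp_rw [fun k => (hident k).integral_eq]
  rw [hcenter, charFun_map_mul_comp
      (Finset.aemeasurable_fun_sum _ fun k _ => (hident' k).aemeasurable_fst),
    hindep'.charFun_map_fun_sum_eq_prod fun k => (hident' k).aemeasurable_fst]
  simp [fun k => (hident' k).map_eq]

variable [IsProbabilityMeasure μ]

lemma HasGaussianLimit.comp {Ω' : Type*} [MeasurableSpace Ω'] {ν : Measure Ω'} {X : Ω' → Ω}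
    {Y : ℕ → Ω → ℝ} {v : ℝ≥0} (hY : HasGaussianLimit Y (ν.map X) v) (hX : AEMeasurable X ν) :
    HasGaussianLimit (fun n ω => Y n (X ω)) ν v where
  memLp n := (hY.memLp n).comp_of_map hX
  tendsto_variance :=
    hY.tendsto_variance.congr fun n => variance_map (hY.memLp n).aemeasurable hX
  tendsto_charFun θ := by
    refine (hY.tendsto_charFun θ).congr fun n => ?_
    rw [AEMeasurable.map_map_of_aemeasurable ((hY.memLp n).aemeasurable.sub_const _) hX,
      integral_map hX (hY.memLp n).aestronglyMeasurable]
    rfl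

lemma HasGaussianLimit.tendsto_integral {Y : ℕ → Ω → ℝ} {v : ℝ≥0} (hY : HasGaussianLimit Y μ v)
    (g : BoundedContinuousFunction ℝ ℝ) :
    Tendsto (fun n => ∫ ω, g (Y n ω - μ[Y n]) ∂μ) atTop (𝓝 (∫ z, g z ∂gaussianReal 0 v)) := by
  have hmeas n : AEMeasurable (fun ω => Y n ω - μ[Y n]) μ :=
    (hY.memLp n).aestronglyMeasurable.aemeasurable.sub_const _
  let law : ℕ → ProbabilityMeasure ℝ := fun n =>
    ⟨μ.map fun ω => Y n ω - μ[Y n], Measure.isProbabilityMeasure_map (hmeas n)⟩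
  have hlaw : Tendsto law atTop (𝓝 (⟨gaussianReal 0 v, inferInstance⟩ : ProbabilityMeasure ℝ)) :=
    ProbabilityMeasure.tendsto_of_tendsto_charFun hY.tendsto_charFun
  have hint := ProbabilityMeasure.tendsto_iff_forall_integral_tendsto.1 hlaw g
  refine hint.congr fun n => ?_
  exact integral_map (hmeas n) g.continuous.aestronglyMeasurable

lemma sqrt_variance_eq_lpNorm {X : Ω → ℝ} (hX : MemLp X 2 μ) :
    √Var[X; μ] = lpNorm (fun ω => X ω - μ[X]) 2 μ := by
  have hmeas : AEStronglyMeasurable (fun ω => X ω - μ[X]) μ :=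
    (hX.sub (memLp_const _)).aestronglyMeasurable
  rw [variance_eq_integral hX.aemeasurable,
    lpNorm_eq_integral_norm_rpow_toReal two_ne_zero ENNReal.ofNat_ne_top hmeas, Real.sqrt_eq_rpow]
  simp

lemma abs_sqrt_variance_sub_le {X Z : Ω → ℝ} (hX : MemLp X 2 μ) (hZ : MemLp Z 2 μ) :
    |√Var[X; μ] - √Var[Z; μ]| ≤ √Var[X - Z; μ] := by
  have hX' : MemLp (fun ω => X ω - μ[X]) 2 μ := hX.sub (memLp_const _)
  have hZ' : MemLp (fun ω => Z ω - μ[Z]) 2 μ := hZ.sub (memLp_const _)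
  have hsub : (fun ω => (X - Z) ω - μ[X - Z]) =
      (fun ω => X ω - μ[X]) - fun ω => Z ω - μ[Z] := by
    ext ω
    rw [integral_sub' (hX.integrable one_le_two) (hZ.integrable one_le_two)]
    simp only [Pi.sub_apply]
    ring
  rw [sqrt_variance_eq_lpNorm hX, sqrt_variance_eq_lpNorm hZ, sqrt_variance_eq_lpNorm (hX.sub hZ),
    hsub, abs_sub_le_iff]
  exact ⟨sub_le_iff_le_add'.2 (lpNorm_le_lpNorm_add_lpNorm_sub' hZ' one_le_two),
    sub_le_iff_le_add'.2 (lpNorm_le_lpNorm_add_lpNorm_sub hX' one_le_two)⟩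

lemma integral_abs_sub_integral_le_sqrt_variance {X : Ω → ℝ} (hX : MemLp X 2 μ) :
    ∫ ω, |X ω - μ[X]| ∂μ ≤ √Var[X; μ] := by
  have hX' : MemLp (fun ω => X ω - μ[X]) 2 μ := hX.sub (memLp_const _)
  rw [sqrt_variance_eq_lpNorm hX]
  simp_rw [← Real.norm_eq_abs]
  rw [← lpNorm_one_eq_integral_norm hX'.aestronglyMeasurable,
    ← toReal_eLpNorm hX'.aestronglyMeasurable, ← toReal_eLpNorm hX'.aestronglyMeasurable]
  exact ENNReal.toReal_mono hX'.eLpNorm_ne_top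
    (eLpNorm_le_eLpNorm_of_exponent_le one_le_two hX'.aestronglyMeasurable)

lemma norm_exp_mul_I_sub_exp_mul_I_le (x y : ℝ) :
    ‖Complex.exp (x * Complex.I) - Complex.exp (y * Complex.I)‖ ≤ |x - y| := by
  have hfactor : Complex.exp (x * Complex.I) - Complex.exp (y * Complex.I) =
      Complex.exp (y * Complex.I) * (Complex.exp (Complex.I * (x - y : ℝ)) - 1) := by
    rw [mul_sub, ← Complex.exp_add, mul_one]
    congr 2
    push_cast
    ring
  rw [hfactor, norm_mul, Complex.norm_exp_ofReal_mul_I, one_mul]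
  exact Real.norm_exp_I_mul_ofReal_sub_one_le

lemma norm_charFun_map_sub_le {X Z : Ω → ℝ} (hX : Integrable X μ) (hZ : Integrable Z μ) (θ : ℝ) :
    ‖charFun (μ.map X) θ - charFun (μ.map Z) θ‖ ≤ |θ| * ∫ ω, |X ω - Z ω| ∂μ := by
  have hcont : Continuous fun x : ℝ => Complex.exp (θ * x * Complex.I) := by fun_prop
  have hcharFun {W : Ω → ℝ} (hW : Integrable W μ) :
      charFun (μ.map W) θ = ∫ ω, Complex.exp (((θ * W ω : ℝ) : ℂ) * Complex.I) ∂μ := by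
    rw [charFun_apply_real, integral_map hW.aemeasurable hcont.aestronglyMeasurable]
    push_cast
    rfl
  have hint {W : Ω → ℝ} (hW : Integrable W μ) :
      Integrable (fun ω => Complex.exp (((θ * W ω : ℝ) : ℂ) * Complex.I)) μ :=
    .of_bound (by fun_prop) 1 (.of_forall fun ω => (Complex.norm_exp_ofReal_mul_I _).le)
  rw [hcharFun hX, hcharFun hZ, ← integral_sub (hint hX) (hint hZ), ← integral_const_mul]
  refine norm_integral_le_of_norm_le ((hX.sub hZ).abs.const_mul _) (.of_forall fun ω => ?_)
  refine (norm_exp_mul_I_sub_exp_mul_I_le _ _).trans_eq ?_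
  rw [← mul_sub, abs_mul]

lemma norm_charFun_map_centered_sub_le {X Z : Ω → ℝ} (hX : MemLp X 2 μ) (hZ : MemLp Z 2 μ)
    (θ : ℝ) :
    ‖charFun (μ.map fun ω => X ω - μ[X]) θ - charFun (μ.map fun ω => Z ω - μ[Z]) θ‖ ≤
      |θ| * √Var[X - Z; μ] := by
  have hXi := hX.integrable one_le_two
  have hZi := hZ.integrable one_le_two
  refine (norm_charFun_map_sub_le (hXi.sub (integrable_const _)) (hZi.sub (integrable_const _))
    θ).trans (mul_le_mul_of_nonneg_left ?_ (abs_nonneg θ))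
  refine le_of_eq_of_le (integral_congr_ae (.of_forall fun ω => ?_))
    (integral_abs_sub_integral_le_sqrt_variance (hX.sub hZ))
  rw [integral_sub' hXi hZi]
  simp only [Pi.sub_apply]
  ring_nf

lemma dist_sdCharFun_le {X Z : Ω → ℝ} (hX : MemLp X 2 μ) (hZ : MemLp Z 2 μ) (θ : ℝ) :
    dist (sdCharFun μ θ X) (sdCharFun μ θ Z) ≤ (1 + |θ|) * √Var[X - Z; μ] := by
  have hsd := Real.sqrt_nonneg Var[X - Z; μ]
  refine max_le ?_ ?_
  · refine (abs_sqrt_variance_sub_le hX hZ).trans ?_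
    nlinarith [abs_nonneg θ]
  · refine (dist_eq_norm _ _).trans_le ((norm_charFun_map_centered_sub_le hX hZ θ).trans ?_)
    nlinarith

lemma exists_tendsto_sdCharFun_of_approx {Y : ℕ → Ω → ℝ} (hY : ∀ n, MemLp (Y n) 2 μ)
    (happrox : ∀ ε > 0, ∃ Z v, HasGaussianLimit Z μ v ∧ ∀ᶠ n in atTop, Var[Y n - Z n; μ] ≤ ε)
    (θ : ℝ) : ∃ l ∈ gaussianCurve θ, Tendsto (fun n => sdCharFun μ θ (Y n)) atTop (𝓝 l) := by
  refine exists_tendsto_of_forall_eventually_dist_lt (isClosed_gaussianCurve θ) fun ε hε => ?_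
  have hθ : 0 < 1 + |θ| := by positivity
  obtain ⟨Z, v, hZ, hYZ⟩ := happrox ((ε / 2 / (1 + |θ|)) ^ 2) (by positivity)
  obtain ⟨l, hlF, hl⟩ := hZ.exists_tendsto_sdCharFun θ
  refine ⟨l, hlF, ?_⟩
  filter_upwards [hYZ, Metric.tendsto_nhds.1 hl (ε / 2) (half_pos hε)] with n hvar hdist
  have hclose : dist (sdCharFun μ θ (Y n)) (sdCharFun μ θ (Z n)) ≤ ε / 2 :=
    calc dist (sdCharFun μ θ (Y n)) (sdCharFun μ θ (Z n))
        ≤ (1 + |θ|) * √Var[Y n - Z n; μ] := dist_sdCharFun_le (hY n) (hZ.memLp n) θ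
      _ ≤ (1 + |θ|) * (ε / 2 / (1 + |θ|)) := by
        gcongr
        exact Real.sqrt_le_iff.2 ⟨by positivity, hvar⟩
      _ = ε / 2 := mul_div_cancel₀ _ hθ.ne'
  linarith [dist_triangle (sdCharFun μ θ (Y n)) (sdCharFun μ θ (Z n)) l]

lemma exists_hasGaussianLimit_of_approx {Y : ℕ → Ω → ℝ} (hY : ∀ n, MemLp (Y n) 2 μ)
    (happrox : ∀ ε > 0, ∃ Z v, HasGaussianLimit Z μ v ∧ ∀ᶠ n in atTop, Var[Y n - Z n; μ] ≤ ε) :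
    ∃ v, HasGaussianLimit Y μ v := by
  choose l hlF hl using exists_tendsto_sdCharFun_of_approx hY happrox
  have hsd (θ : ℝ) : Tendsto (fun n => √Var[Y n; μ]) atTop (𝓝 (l θ).1) :=
    (continuous_fst.tendsto _).comp (hl θ)
  refine ⟨((l 0).1 ^ 2).toNNReal, hY, ?_, fun θ => ?_⟩
  · rw [Real.coe_toNNReal _ (sq_nonneg _)]
    exact ((hsd 0).pow 2).congr fun n => Real.sq_sqrt (variance_nonneg _ _)
  · have hcurve : (l θ).2 = charFun (gaussianReal 0 ((l θ).1 ^ 2).toNNReal) θ := hlF θ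
    rw [tendsto_nhds_unique (hsd 0) (hsd θ), ← hcurve]
    exact (continuous_snd.tendsto _).comp (hl θ)

lemma tendsto_charFun_map_centered_pow {X : Ω → ℝ} (hX : MemLp X 2 μ) {s : ℕ → ℝ} {k : ℕ → ℕ}
    {c : ℝ} (hs : Tendsto s atTop (𝓝 0)) (hks : Tendsto (fun n => k n * s n ^ 2) atTop (𝓝 c)) :
    Tendsto (fun n => charFun (μ.map fun ω => X ω - μ[X]) (s n) ^ k n) atTop
      (𝓝 (Complex.exp (-(Var[X; μ] * c / 2)))) := by
  have hmeas : AEMeasurable (fun ω => X ω - μ[X]) μ := hX.aemeasurable.sub_const _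
  have := Measure.isProbabilityMeasure_map hmeas
  have hmean : ∫ x, x ∂μ.map (fun ω => X ω - μ[X]) = 0 := by
    rw [integral_map hmeas (f := fun x : ℝ => x) aestronglyMeasurable_id,
      integral_sub (hX.integrable one_le_two) (integrable_const _)]
    simp
  have hvar : Var[id; μ.map fun ω => X ω - μ[X]] = Var[X; μ] := by
    rw [variance_id_map hmeas, variance_sub_const hX.aestronglyMeasurable]
  rw [← hvar]
  exact tendsto_charFun_pow ((memLp_map_measure_iff aestronglyMeasurable_id hmeas).2
    (hX.sub (memLp_const _))) hmean hs hks

lemma hasGaussianLimit_const_mul_sum {κ : ℕ → Type*} [∀ n, Fintype (κ n)]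
    {X : (n : ℕ) → κ n → Ω → ℝ} {X₀ : Ω → ℝ} (hX₀ : MemLp X₀ 2 μ)
    (hident : ∀ n k, IdentDistrib (X n k) X₀ μ μ) (hindep : ∀ n, iIndepFun (X n) μ)
    {a : ℕ → ℝ} {c : ℝ≥0} (ha : Tendsto a atTop (𝓝 0))
    (hc : Tendsto (fun n => Fintype.card (κ n) * a n ^ 2) atTop (𝓝 (c : ℝ))) :
    HasGaussianLimit (fun n ω => a n * ∑ k, X n k ω) μ (c * Var[X₀; μ].toNNReal) where
  memLp n := (memLp_finsetSum _ fun k _ => (hident n k).symm.memLp_snd hX₀).const_mul (a n)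
  tendsto_variance := by
    simp_rw [fun n => variance_const_mul_sum hX₀ (hident n) (hindep n) (a n)]
    rw [NNReal.coe_mul, Real.coe_toNNReal _ (variance_nonneg _ _)]
    exact hc.mul_const _
  tendsto_charFun θ := by
    have hlim := tendsto_charFun_map_centered_pow hX₀ (s := fun n => a n * θ)
      (k := fun n => Fintype.card (κ n)) (c := c * θ ^ 2) (by simpa using ha.mul_const θ)
      (by simpa only [mul_pow, mul_assoc] using hc.mul_const (θ ^ 2))
    simp_rw [fun n => charFun_map_centered_const_mul_sum (hX₀.integrable one_le_two) (hident n)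
      (hindep n) (a n) θ, charFun_gaussianReal]
    convert hlim using 3
    push_cast [Real.coe_toNNReal _ (variance_nonneg X₀ μ)]
    simp
    ring

end GaussianLimit

/-! ### Box functionals and their block approximation -/

section BoxFunctional

variable {d : ℕ} {c c' : Fin d → ℤ} {r r' m n : ℕ} {Q : ElemCube d}

/-- The corner of an elementary cube with the smallest coordinates. -/
def corner (Q : ElemCube d) : Fin d → ℤ := fun i => (Q i).1

/-- The box of radius `r` around `c` lies in the box of radius `r'` around `c'`. -/
def BoxSubset (c : Fin d → ℤ) (r : ℕ) (c' : Fin d → ℤ) (r' : ℕ) : Prop :=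
  ∀ i, |c i - c' i| + r ≤ r'

lemma BoxSubset.of_le (c : Fin d → ℤ) (h : r ≤ r') : BoxSubset c r c r' := fun i => by
  simpa using h

lemma BoxSubset.trans {c'' : Fin d → ℤ} {r'' : ℕ} (h : BoxSubset c r c' r')
    (h' : BoxSubset c' r' c'' r'') : BoxSubset c r c'' r'' := fun i => by
  linarith [h i, h' i, abs_sub_le (c i) (c' i) (c'' i)]

/-- The cubes whose corner lies in the product of the intervals `[a i, b i]`. -/
def cubesWithCorner (a b : Fin d → ℤ) : Finset (ElemCube d) :=
  Fintype.piFinset fun i => Finset.Icc (a i) (b i) ×ˢ Finset.univ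

@[simp] lemma mem_cubesWithCorner {a b : Fin d → ℤ} :
    Q ∈ cubesWithCorner a b ↔ ∀ i, a i ≤ (Q i).1 ∧ (Q i).1 ≤ b i := by
  simp [cubesWithCorner]

lemma card_cubesWithCorner {a b : Fin d → ℤ} {k : ℕ} (h : ∀ i, b i + 1 - a i = k) :
    (cubesWithCorner a b).card = (k * 2) ^ d := by
  simp [cubesWithCorner, Fintype.card_piFinset, h]

/-- The cubes meeting the box of radius `r` around `c`. -/
def cubesMeeting (c : Fin d → ℤ) (r : ℕ) : Finset (ElemCube d) :=
  cubesWithCorner (fun i => c i - r - 1) (fun i => c i + r)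

/-- The cubes whose corner lies in the box of radius `r` around `c`. -/
def cubesNear (c : Fin d → ℤ) (r : ℕ) : Finset (ElemCube d) :=
  cubesWithCorner (fun i => c i - r) (fun i => c i + r)

lemma card_cubesMeeting (c : Fin d → ℤ) (r : ℕ) :
    (cubesMeeting c r).card = ((2 * r + 2) * 2) ^ d :=
  card_cubesWithCorner fun i => by push_cast; ring

lemma card_cubesNear (c : Fin d → ℤ) (r : ℕ) : (cubesNear c r).card = ((2 * r + 1) * 2) ^ d :=
  card_cubesWithCorner fun i => by push_cast; ring

lemma cubesNear_subset_cubesMeeting (h : BoxSubset c r c' r') :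
    cubesNear c r ⊆ cubesMeeting c' r' := fun Q hQ => by
  simp only [cubesNear, cubesMeeting, mem_cubesWithCorner] at hQ ⊢
  intro i
  have hsub := h i
  have := abs_le.1 (le_sub_iff_add_le.2 hsub)
  constructor <;> linarith [hQ i]

lemma cubesMeeting_subset_cubesMeeting (h : BoxSubset c r c' r') :
    cubesMeeting c r ⊆ cubesMeeting c' r' := fun Q hQ => by
  simp only [cubesMeeting, mem_cubesWithCorner] at hQ ⊢
  intro i
  have hsub := h i
  have := abs_le.1 (le_sub_iff_add_le.2 hsub)
  constructor <;> linarith [hQ i]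

lemma boxSubset_corner_of_mem_cubesNear (hQ : Q ∈ cubesNear c r) (m : ℕ) :
    BoxSubset (corner Q) m c (r + m) := fun i => by
  have hi := mem_cubesWithCorner.1 hQ i
  have habs : |corner Q i - c i| ≤ r := abs_le.2 (by simp only [corner]; constructor <;> linarith)
  push_cast
  exact add_le_add_left habs _

/-- A family of functionals of a set of cubes, indexed by boxes, that is local, translation
covariant, and has bounded discrete derivatives which increase with the box. -/
structure IsBoxFunctional (Φ : (Fin d → ℤ) → ℕ → Set (ElemCube d) → ℝ) (C : ℝ) : Prop where
  determinedBy : ∀ c r, DeterminedBy (Φ c r) (cubesMeeting c r : Set (ElemCube d))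
  abs_discreteDeriv_le : ∀ c r Q A, |discreteDeriv (Φ c r) Q A| ≤ C
  discreteDeriv_mono : ∀ {c r c' r' Q}, BoxSubset (corner Q) 1 c r → BoxSubset c r c' r' →
    ∀ A, discreteDeriv (Φ c r) Q A ≤ discreteDeriv (Φ c' r') Q A
  translate : ∀ x c r A, Φ (c + x) r (translateCube x '' A) = Φ c r A

/-- The number of blocks of radius `r`, with gaps of width two, along an edge of the box of radius
`n`. -/
def blockCount (n r : ℕ) : ℕ := n / (r + 1)

/-- The centres of the blocks of radius `r` in the box of radius `n` around the origin. -/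
def blockCenter (n r : ℕ) (z : Fin d → Fin (blockCount n r)) (i : Fin d) : ℤ :=
  -n + (2 * r + 2) * (z i : ℕ) + r + 1

lemma boxSubset_blockCenter (z : Fin d → Fin (blockCount n r)) :
    BoxSubset (blockCenter n r z) r 0 n := fun i => by
  have hz : ((r : ℤ) + 1) * ((z i : ℕ) + 1) ≤ n := by
    exact_mod_cast (Nat.mul_le_mul_left (r + 1) (z i).2).trans (Nat.mul_div_le n (r + 1))
  have hnonneg : (0 : ℤ) ≤ (2 * r + 2) * (z i : ℕ) := by positivity
  refine add_le_of_le_sub_right (abs_le.2 ?_)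
  simp only [blockCenter, Pi.zero_apply]
  constructor <;> linarith

lemma coe_eq_ediv_of_mem_cubesMeeting {z : Fin d → Fin (blockCount n r)}
    (hQ : Q ∈ cubesMeeting (blockCenter n r z) r) (i : Fin d) :
    ((z i : ℕ) : ℤ) = ((Q i).1 + n) / (2 * r + 2) := by
  have hi := mem_cubesWithCorner.1 hQ i
  simp only [blockCenter] at hi
  refine ((Int.ediv_emod_unique (r := (Q i).1 + n - (2 * r + 2) * (z i : ℕ)) (by positivity)).2
    ⟨by ring, by linarith, by linarith⟩).1.symm

lemma eq_of_mem_cubesMeeting_blockCenter {z z' : Fin d → Fin (blockCount n r)}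
    (hz : Q ∈ cubesMeeting (blockCenter n r z) r)
    (hz' : Q ∈ cubesMeeting (blockCenter n r z') r) : z = z' :=
  funext fun i => Fin.ext <| by
    exact_mod_cast (coe_eq_ediv_of_mem_cubesMeeting hz i).trans
      (coe_eq_ediv_of_mem_cubesMeeting hz' i).symm

lemma pairwise_disjoint_cubesMeeting_blockCenter (n r : ℕ) :
    Pairwise (Function.onFun Disjoint fun z : Fin d → Fin (blockCount n r) =>
      cubesMeeting (blockCenter n r z) r) :=
  fun _ _ hne => Finset.disjoint_left.2 fun _ hz hz' =>
    hne (eq_of_mem_cubesMeeting_blockCenter hz hz')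

/-- The cubes whose corner has distance at least `m` from the complement of its block of radius
`s + m`. -/
def innerCubes (d n s m : ℕ) : Finset (ElemCube d) :=
  Finset.univ.biUnion fun z : Fin d → Fin (blockCount n (s + m)) =>
    cubesNear (blockCenter n (s + m) z) s

lemma card_innerCubes (d n s m : ℕ) :
    (innerCubes d n s m).card = (blockCount n (s + m) * ((2 * s + 1) * 2)) ^ d := by
  have hsub (z : Fin d → Fin (blockCount n (s + m))) :
      cubesNear (blockCenter n (s + m) z) s ⊆ cubesMeeting (blockCenter n (s + m) z) (s + m) :=
    cubesNear_subset_cubesMeeting (.of_le _ (Nat.le_add_right s m))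
  rw [innerCubes, Finset.card_biUnion fun z _ z' _ hne =>
    (pairwise_disjoint_cubesMeeting_blockCenter n (s + m) hne).mono (hsub z) (hsub z')]
  simp [card_cubesNear, mul_pow]

lemma innerCubes_subset_cubesMeeting (d n s m : ℕ) :
    innerCubes d n s m ⊆ cubesMeeting 0 n :=
  Finset.biUnion_subset.2 fun z _ => cubesNear_subset_cubesMeeting
    ((BoxSubset.of_le _ (Nat.le_add_right s m)).trans (boxSubset_blockCenter z))

end BoxFunctional

lemma eventually_forall_le_add_of_monotone {u : ℕ → ℝ} (hu : Monotone u)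
    (hbdd : BddAbove (Set.range u)) {ε : ℝ} (hε : 0 < ε) :
    ∀ᶠ m in atTop, ∀ M, u M ≤ u m + ε := by
  filter_upwards [(tendsto_atTop_ciSup hu hbdd).eventually_const_lt (sub_lt_self _ hε)] with m hm M
  linarith [le_ciSup hbdd M]

section BlockApproximation

variable {d : ℕ} {Φ : (Fin d → ℤ) → ℕ → Set (ElemCube d) → ℝ} {C : ℝ} {n r s m : ℕ}
  {μ : Measure (Set (ElemCube d))} {Q : ElemCube d}

/-- The mean discrete derivative at a cube of the functional of the box of radius `m + 1` around
that cube. The radius is positive so that the box contains the cube. -/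
def meanDeriv (Φ : (Fin d → ℤ) → ℕ → Set (ElemCube d) → ℝ) (μ : Measure (Set (ElemCube d)))
    (Q : ElemCube d) (m : ℕ) : ℝ :=
  ∫ A, discreteDeriv (Φ (corner Q) (m + 1)) Q A ∂μ

lemma leftInverse_translateCube_neg (x : Fin d → ℤ) :
    Function.LeftInverse (translateCube (-x)) (translateCube x) := fun Q => funext fun i =>
  Prod.ext (add_neg_cancel_right (Q i).1 (x i)) rfl

lemma rightInverse_translateCube_neg (x : Fin d → ℤ) :
    Function.RightInverse (translateCube (-x)) (translateCube x) := fun Q => by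
  simpa only [neg_neg] using leftInverse_translateCube_neg (-x) Q

lemma translateCube_injective (x : Fin d → ℤ) : Function.Injective (translateCube x) :=
  (leftInverse_translateCube_neg x).injective

namespace IsBoxFunctional

lemma integrable_discreteDeriv [IsFiniteMeasure μ] (hΦ : IsBoxFunctional Φ C) (c : Fin d → ℤ)
    (r : ℕ) (Q : ElemCube d) : Integrable (discreteDeriv (Φ c r) Q) μ :=
  (((hΦ.determinedBy c r).discreteDeriv Q).mono Set.sdiff_subset).integrable

lemma discreteDeriv_translate (hΦ : IsBoxFunctional Φ C) (x c : Fin d → ℤ) (r : ℕ)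
    (Q : ElemCube d) (A : Set (ElemCube d)) :
    discreteDeriv (Φ (c + x) r) (translateCube x Q) (translateCube x '' A) =
      discreteDeriv (Φ c r) Q A := by
  simp only [discreteDeriv]
  rw [← Set.image_insert_eq, ← Set.image_singleton, ← Set.image_sdiff (translateCube_injective x),
    hΦ.translate, hΦ.translate]

lemma meanDeriv_translateCube [IsFiniteMeasure μ] (hΦ : IsBoxFunctional Φ C) {x : Fin d → ℤ}
    (hinv : MeasurePreserving (fun A => translateCube x '' A) μ μ) (Q : ElemCube d) (m : ℕ) :
    meanDeriv Φ μ (translateCube x Q) m = meanDeriv Φ μ Q m := by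
  have hint := hΦ.integrable_discreteDeriv (μ := μ) (corner Q + x) (m + 1) (translateCube x Q)
  calc meanDeriv Φ μ (translateCube x Q) m
      = ∫ A, discreteDeriv (Φ (corner Q + x) (m + 1)) (translateCube x Q) A
          ∂μ.map (fun A => translateCube x '' A) := by rw [hinv.map_eq]; rfl
    _ = ∫ A, discreteDeriv (Φ (corner Q + x) (m + 1)) (translateCube x Q) (translateCube x '' A)
          ∂μ := integral_map hinv.measurable.aemeasurable
            (hinv.map_eq.symm ▸ hint.aestronglyMeasurable)
    _ = meanDeriv Φ μ Q m := by simp only [hΦ.discreteDeriv_translate, meanDeriv]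

lemma meanDeriv_mono [IsFiniteMeasure μ] (hΦ : IsBoxFunctional Φ C) (Q : ElemCube d) :
    Monotone (meanDeriv Φ μ Q) := fun m _ hmM =>
  integral_mono (hΦ.integrable_discreteDeriv _ _ _) (hΦ.integrable_discreteDeriv _ _ _) <|
    hΦ.discreteDeriv_mono (.of_le _ (Nat.le_add_left 1 m)) (.of_le _ (Nat.add_le_add_right hmM 1))

lemma meanDeriv_le [IsProbabilityMeasure μ] (hΦ : IsBoxFunctional Φ C) (Q : ElemCube d) (m : ℕ) :
    meanDeriv Φ μ Q m ≤ C :=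
  (integral_mono (hΦ.integrable_discreteDeriv _ _ _) (integrable_const C)
    fun A => (abs_le.1 (hΦ.abs_discreteDeriv_le _ _ Q A)).2).trans_eq (by simp)

/-- By translation invariance only the finitely many cubes with corner `0` matter. -/
lemma eventually_meanDeriv_le_add [IsProbabilityMeasure μ] (hΦ : IsBoxFunctional Φ C)
    (hinv : ∀ x, MeasurePreserving (fun A => translateCube x '' A) μ μ) {ε : ℝ} (hε : 0 < ε) :
    ∀ᶠ m in atTop, ∀ Q M, meanDeriv Φ μ Q M ≤ meanDeriv Φ μ Q m + ε := by
  have horigin : ∀ᶠ m in atTop, ∀ (b : Fin d → Bool) M, meanDeriv Φ μ (fun i => (0, b i)) M ≤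
      meanDeriv Φ μ (fun i => (0, b i)) m + ε :=
    eventually_all.2 fun b => eventually_forall_le_add_of_monotone (hΦ.meanDeriv_mono _)
      ⟨C, Set.forall_mem_range.2 (hΦ.meanDeriv_le _)⟩ hε
  filter_upwards [horigin] with m hm Q M
  have hQ : Q = translateCube (corner Q) fun i => (0, (Q i).2) :=
    funext fun i => by simp [translateCube, corner]
  rw [hQ, hΦ.meanDeriv_translateCube (hinv _), hΦ.meanDeriv_translateCube (hinv _)]
  exact hm _ M

end IsBoxFunctional

/-- The difference between the functional of the box of radius `n` and the sum of the functionals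
of its blocks of radius `r`. -/
def blockError (Φ : (Fin d → ℤ) → ℕ → Set (ElemCube d) → ℝ) (n r : ℕ) (A : Set (ElemCube d)) : ℝ :=
  Φ 0 n A - ∑ z : Fin d → Fin (blockCount n r), Φ (blockCenter n r z) r A

lemma discreteDeriv_blockError (n r : ℕ) (Q : ElemCube d) (A : Set (ElemCube d)) :
    discreteDeriv (blockError Φ n r) Q A = discreteDeriv (Φ 0 n) Q A -
      ∑ z : Fin d → Fin (blockCount n r), discreteDeriv (Φ (blockCenter n r z) r) Q A := by
  simp only [discreteDeriv, blockError, Finset.sum_sub_distrib]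
  ring

namespace IsBoxFunctional

lemma determinedBy_blockError (hΦ : IsBoxFunctional Φ C) (n r : ℕ) :
    DeterminedBy (blockError Φ n r) (cubesMeeting (0 : Fin d → ℤ) n : Set (ElemCube d)) :=
  (hΦ.determinedBy 0 n).comp₂ (DeterminedBy.finset_sum fun z _ =>
    (hΦ.determinedBy (blockCenter n r z) r).mono <| Finset.coe_subset.2 <|
      cubesMeeting_subset_cubesMeeting (boxSubset_blockCenter z)) fun a b => a - b

lemma discreteDeriv_blockError_of_mem (hΦ : IsBoxFunctional Φ C)
    {z : Fin d → Fin (blockCount n r)} (hQ : Q ∈ cubesMeeting (blockCenter n r z) r)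
    (A : Set (ElemCube d)) :
    discreteDeriv (blockError Φ n r) Q A =
      discreteDeriv (Φ 0 n) Q A - discreteDeriv (Φ (blockCenter n r z) r) Q A := by
  rw [discreteDeriv_blockError, Finset.sum_eq_single_of_mem z (Finset.mem_univ z)]
  exact fun z' _ hne => (hΦ.determinedBy _ _).discreteDeriv_eq_zero
    (fun hQ' => hne (eq_of_mem_cubesMeeting_blockCenter hQ' hQ)) A

lemma abs_discreteDeriv_blockError_le (hΦ : IsBoxFunctional Φ C) (n r : ℕ) (Q : ElemCube d)
    (A : Set (ElemCube d)) : |discreteDeriv (blockError Φ n r) Q A| ≤ 2 * C := by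
  by_cases hQ : ∃ z : Fin d → Fin (blockCount n r), Q ∈ cubesMeeting (blockCenter n r z) r
  · obtain ⟨z, hz⟩ := hQ
    rw [hΦ.discreteDeriv_blockError_of_mem hz, two_mul]
    exact (abs_sub _ _).trans
      (add_le_add (hΦ.abs_discreteDeriv_le _ _ _ _) (hΦ.abs_discreteDeriv_le _ _ _ _))
  · have hsum : ∑ z : Fin d → Fin (blockCount n r), discreteDeriv (Φ (blockCenter n r z) r) Q A
        = 0 :=
      Finset.sum_eq_zero fun z _ =>
        (hΦ.determinedBy _ _).discreteDeriv_eq_zero (fun hz => hQ ⟨z, hz⟩) A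
    rw [discreteDeriv_blockError, hsum, sub_zero]
    have hC := hΦ.abs_discreteDeriv_le 0 n Q A
    linarith [abs_nonneg (discreteDeriv (Φ 0 n) Q A)]

/-- Sandwich the block and the big box between the boxes of radius `m + 1` and `2 * n + 1` around
the cube. -/
lemma discreteDeriv_blockError_mem_Icc (hΦ : IsBoxFunctional Φ C)
    (hQ : Q ∈ innerCubes d n s (m + 1)) (A : Set (ElemCube d)) :
    discreteDeriv (blockError Φ n (s + (m + 1))) Q A ∈
      Set.Icc 0 (discreteDeriv (Φ (corner Q) (2 * n + 1)) Q A -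
        discreteDeriv (Φ (corner Q) (m + 1)) Q A) := by
  obtain ⟨z, -, hz⟩ := Finset.mem_biUnion.1 hQ
  have hblock := boxSubset_corner_of_mem_cubesNear hz (m + 1)
  have hone : BoxSubset (corner Q) 1 (corner Q) (m + 1) := .of_le _ (Nat.le_add_left 1 m)
  have hbox := hblock.trans (boxSubset_blockCenter z)
  have hdouble : BoxSubset 0 n (corner Q) (2 * n + 1) := fun i => by
    have hi := hbox i
    simp only [Pi.zero_apply, sub_zero, zero_sub, abs_neg] at hi ⊢
    push_cast at hi ⊢
    linarith
  rw [hΦ.discreteDeriv_blockError_of_mem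
    (cubesNear_subset_cubesMeeting (.of_le _ (Nat.le_add_right s (m + 1))) hz)]
  exact ⟨sub_nonneg.2 (hΦ.discreteDeriv_mono (hone.trans hblock) (boxSubset_blockCenter z) A),
    sub_le_sub (hΦ.discreteDeriv_mono (hone.trans hbox) hdouble A)
      (hΦ.discreteDeriv_mono hone hblock A)⟩

variable {ε : ℝ}

lemma integral_discreteDeriv_blockError_sq_le [IsProbabilityMeasure μ] (hΦ : IsBoxFunctional Φ C)
    (hQ : Q ∈ innerCubes d n s (m + 1))
    (hm : meanDeriv Φ μ Q (2 * n) ≤ meanDeriv Φ μ Q m + ε) :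
    ∫ A, discreteDeriv (blockError Φ n (s + (m + 1))) Q A ^ 2 ∂μ ≤ 2 * C * ε := by
  have hdet := ((hΦ.determinedBy_blockError n (s + (m + 1))).discreteDeriv Q).mono Set.sdiff_subset
  have hC : 0 ≤ 2 * C := (abs_nonneg _).trans (hΦ.abs_discreteDeriv_blockError_le n 0 Q ∅)
  calc ∫ A, discreteDeriv (blockError Φ n (s + (m + 1))) Q A ^ 2 ∂μ
      ≤ ∫ A, 2 * C * (discreteDeriv (Φ (corner Q) (2 * n + 1)) Q A -
          discreteDeriv (Φ (corner Q) (m + 1)) Q A) ∂μ := by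
        refine integral_mono (hdet.comp (· ^ 2)).integrable
          (((hΦ.integrable_discreteDeriv _ _ _).sub
            (hΦ.integrable_discreteDeriv _ _ _)).const_mul _) fun A => ?_
        have hmem := hΦ.discreteDeriv_blockError_mem_Icc hQ A
        have habs := (abs_le.1 (hΦ.abs_discreteDeriv_blockError_le n (s + (m + 1)) Q A)).2
        exact (pow_two _).trans_le (mul_le_mul habs hmem.2 hmem.1 hC)
    _ = 2 * C * (meanDeriv Φ μ Q (2 * n) - meanDeriv Φ μ Q m) := by
        rw [integral_const_mul, integral_sub (hΦ.integrable_discreteDeriv _ _ _)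
          (hΦ.integrable_discreteDeriv _ _ _), meanDeriv, meanDeriv]
    _ ≤ 2 * C * ε := mul_le_mul_of_nonneg_left (sub_le_iff_le_add'.2 hm) hC

lemma variance_blockError_le (hμ : iIndepFun (fun Q (A : Set (ElemCube d)) => Q ∈ A) μ)
    (hΦ : IsBoxFunctional Φ C) (hm : ∀ Q M, meanDeriv Φ μ Q M ≤ meanDeriv Φ μ Q m + ε) :
    Var[blockError Φ n (s + (m + 1)); μ] ≤
      (innerCubes d n s (m + 1)).card * (2 * C * ε) +
        ((cubesMeeting (0 : Fin d → ℤ) n).card - (innerCubes d n s (m + 1)).card) *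
          (2 * C) ^ 2 := by
  have := hμ.isProbabilityMeasure
  have hdet := hΦ.determinedBy_blockError n (s + (m + 1))
  have hsub := innerCubes_subset_cubesMeeting d n s (m + 1)
  have hinner : ∑ Q ∈ innerCubes d n s (m + 1),
      ∫ A, discreteDeriv (blockError Φ n (s + (m + 1))) Q A ^ 2 ∂μ ≤
        (innerCubes d n s (m + 1)).card * (2 * C * ε) :=
    (Finset.sum_le_card_nsmul _ _ _ fun Q hQ =>
      hΦ.integral_discreteDeriv_blockError_sq_le hQ (hm Q _)).trans_eq (nsmul_eq_mul _ _)
  have houter : ∑ Q ∈ cubesMeeting 0 n \ innerCubes d n s (m + 1),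
      ∫ A, discreteDeriv (blockError Φ n (s + (m + 1))) Q A ^ 2 ∂μ ≤
        ((cubesMeeting (0 : Fin d → ℤ) n).card - (innerCubes d n s (m + 1)).card) *
          (2 * C) ^ 2 := by
    refine (Finset.sum_le_card_nsmul _ _ ((2 * C) ^ 2) fun Q _ => ?_).trans_eq ?_
    · have hint := (((hdet.discreteDeriv Q).mono Set.sdiff_subset).comp (· ^ 2)).integrable (μ := μ)
      exact (integral_mono hint (integrable_const _) fun A => sq_le_sq'
        (abs_le.1 (hΦ.abs_discreteDeriv_blockError_le n _ Q A)).1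
        (abs_le.1 (hΦ.abs_discreteDeriv_blockError_le n _ Q A)).2).trans_eq (by simp)
    · rw [nsmul_eq_mul, Finset.card_sdiff_of_subset hsub, Nat.cast_sub (Finset.card_le_card hsub)]
  refine (variance_le_sum_integral_discreteDeriv_sq hμ hdet).trans ?_
  rw [← Finset.sum_sdiff hsub, add_comm]
  exact add_le_add hinner houter

end IsBoxFunctional

lemma tendsto_blockCount_div (r : ℕ) :
    Tendsto (fun n : ℕ => (blockCount n r : ℝ) / n) atTop (𝓝 (r + 1 : ℝ)⁻¹) := by
  refine ((tendsto_nat_floor_mul_div_atTop (a := (r + 1 : ℝ)⁻¹) (by positivity)).comp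
    tendsto_natCast_atTop_atTop).congr fun n => ?_
  have hfloor : ⌊(r + 1 : ℝ)⁻¹ * n⌋₊ = blockCount n r := by
    rw [inv_mul_eq_div, blockCount, ← Nat.floor_div_eq_div (K := ℝ), Nat.cast_add_one]
  rw [Function.comp_apply, hfloor]

lemma tendsto_card_cubesMeeting_div (d : ℕ) :
    Tendsto (fun n : ℕ => ((2 * (n : ℝ)) ^ d)⁻¹ * (cubesMeeting (0 : Fin d → ℤ) n).card) atTop
      (𝓝 (2 ^ d)) := by
  have hbase : Tendsto (fun n : ℕ => 2 + 2 * (n : ℝ)⁻¹) atTop (𝓝 2) := by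
    simpa using (tendsto_inv_atTop_nhds_zero_nat (𝕜 := ℝ)).const_mul 2 |>.const_add 2
  refine (hbase.pow d).congr' ?_
  filter_upwards [eventually_gt_atTop 0] with n hn
  rw [card_cubesMeeting, Nat.cast_pow, ← inv_pow, ← mul_pow]
  congr 1
  push_cast
  field_simp

lemma tendsto_card_innerCubes_div (d s m : ℕ) :
    Tendsto (fun n : ℕ => ((2 * (n : ℝ)) ^ d)⁻¹ * (innerCubes d n s m).card) atTop
      (𝓝 (((2 * s + 1) / (s + m + 1)) ^ d)) := by
  have hbase := (tendsto_blockCount_div (s + m)).mul_const (2 * s + 1 : ℝ)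
  rw [inv_mul_eq_div, Nat.cast_add] at hbase
  refine (hbase.pow d).congr fun n => ?_
  rw [card_innerCubes, Nat.cast_pow, ← inv_pow, ← mul_pow]
  congr 1
  push_cast
  field_simp

lemma tendsto_two_mul_add_one_div (m : ℕ) :
    Tendsto (fun s : ℕ => (2 * s + 1 : ℝ) / (s + m + 1)) atTop (𝓝 2) := by
  have hinv : Tendsto (fun s : ℕ => ((s : ℝ) + (m + 1))⁻¹) atTop (𝓝 0) :=
    (tendsto_atTop_add_const_right _ _ tendsto_natCast_atTop_atTop).inv_tendsto_atTop
  have hlim := (hinv.const_mul (2 * m + 1 : ℝ)).const_sub 2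
  rw [mul_zero, sub_zero] at hlim
  refine hlim.congr fun s => ?_
  field_simp
  ring

namespace IsBoxFunctional

theorem exists_eventually_variance_blockError_le
    (hμ : iIndepFun (fun Q (A : Set (ElemCube d)) => Q ∈ A) μ)
    (hinv : ∀ x, MeasurePreserving (fun A => translateCube x '' A) μ μ)
    (hΦ : IsBoxFunctional Φ C) {δ : ℝ} (hδ : 0 < δ) :
    ∃ r, ∀ᶠ n : ℕ in atTop, ((2 * (n : ℝ)) ^ d)⁻¹ * Var[blockError Φ n r; μ] ≤ δ := by
  have := hμ.isProbabilityMeasure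
  have hzero : Tendsto (fun ε => 2 ^ d * (2 * C * ε)) (𝓝[>] 0) (𝓝 0) :=
    ((continuous_const.mul (continuous_const.mul continuous_id)).tendsto' 0 0 (by simp)).mono_left
      nhdsWithin_le_nhds
  obtain ⟨ε, hεδ, hε⟩ := ((hzero.eventually_lt_const hδ).and self_mem_nhdsWithin).exists
  obtain ⟨m, hm⟩ := (hΦ.eventually_meanDeriv_le_add hinv hε).exists
  have hinner := (tendsto_two_mul_add_one_div (m + 1)).pow d
  have hlarge := (hinner.mul_const (2 * C * ε)).add ((hinner.const_sub (2 ^ d)).mul_const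
    ((2 * C) ^ 2))
  rw [sub_self, zero_mul, add_zero] at hlarge
  obtain ⟨s, hs⟩ := (hlarge.eventually_lt_const hεδ).exists
  have hcard := tendsto_card_innerCubes_div d s (m + 1)
  have hbound := (hcard.mul_const (2 * C * ε)).add
    (((tendsto_card_cubesMeeting_div d).sub hcard).mul_const ((2 * C) ^ 2))
  refine ⟨s + (m + 1), (hbound.eventually_lt_const hs).mono fun n hn => ?_⟩
  have hvar := mul_le_mul_of_nonneg_left (hΦ.variance_blockError_le hμ (n := n) (s := s) hm)
    (show 0 ≤ ((2 * (n : ℝ)) ^ d)⁻¹ by positivity)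
  linarith

lemma identDistrib [IsFiniteMeasure μ]
    (hinv : ∀ x, MeasurePreserving (fun A => translateCube x '' A) μ μ)
    (hΦ : IsBoxFunctional Φ C) (c : Fin d → ℤ) (r : ℕ) :
    IdentDistrib (Φ c r) (Φ 0 r) μ μ where
  aemeasurable_fst := (hΦ.determinedBy c r).measurable.aemeasurable
  aemeasurable_snd := (hΦ.determinedBy 0 r).measurable.aemeasurable
  map_eq := by
    have htranslate : Φ 0 r = Φ c r ∘ fun A => translateCube c '' A :=
      funext fun A => by simpa using (hΦ.translate c 0 r A).symm
    rw [htranslate, ← Measure.map_map (hΦ.determinedBy c r).measurable (hinv c).measurable,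
      (hinv c).map_eq]

lemma hasGaussianLimit_sum_blocks (hd : 0 < d)
    (hμ : iIndepFun (fun Q (A : Set (ElemCube d)) => Q ∈ A) μ)
    (hinv : ∀ x, MeasurePreserving (fun A => translateCube x '' A) μ μ)
    (hΦ : IsBoxFunctional Φ C) (r : ℕ) :
    ∃ v, HasGaussianLimit (fun (n : ℕ) A => (√((2 * (n : ℝ)) ^ d))⁻¹ *
      ∑ z : Fin d → Fin (blockCount n r), Φ (blockCenter n r z) r A) μ v := by
  have := hμ.isProbabilityMeasure
  have hvolume : Tendsto (fun n : ℕ => (2 * (n : ℝ)) ^ d) atTop atTop :=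
    (tendsto_pow_atTop hd.ne').comp (tendsto_natCast_atTop_atTop.const_mul_atTop two_pos)
  have hscale := (Real.tendsto_sqrt_atTop.comp hvolume).inv_tendsto_atTop
  have hcount : Tendsto (fun n : ℕ => (Fintype.card (Fin d → Fin (blockCount n r)) : ℝ) *
      (√((2 * (n : ℝ)) ^ d))⁻¹ ^ 2) atTop (𝓝 ((2⁻¹ * (r + 1 : NNReal)⁻¹) ^ d : NNReal)) := by
    push_cast
    refine (((tendsto_blockCount_div r).const_mul 2⁻¹).pow d).congr fun n => ?_
    rw [inv_pow, Real.sq_sqrt (by positivity), Fintype.card_pi_const, Fintype.card_fin,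
      Nat.cast_pow, ← inv_pow, ← mul_pow]
    congr 1
    field_simp
  exact ⟨_, hasGaussianLimit_const_mul_sum ((hΦ.determinedBy 0 r).memLp 2)
    (fun n z => hΦ.identDistrib hinv (blockCenter n r z) r)
    (fun n => DeterminedBy.iIndepFun hμ (fun z => hΦ.determinedBy _ r)
      (pairwise_disjoint_cubesMeeting_blockCenter n r)) hscale hcount⟩

theorem exists_hasGaussianLimit (hd : 0 < d)
    (hμ : iIndepFun (fun Q (A : Set (ElemCube d)) => Q ∈ A) μ)
    (hinv : ∀ x, MeasurePreserving (fun A => translateCube x '' A) μ μ)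
    (hΦ : IsBoxFunctional Φ C) :
    ∃ v, HasGaussianLimit (fun (n : ℕ) A => (√((2 * (n : ℝ)) ^ d))⁻¹ * Φ 0 n A) μ v := by
  have := hμ.isProbabilityMeasure
  refine exists_hasGaussianLimit_of_approx
    (fun n => ((hΦ.determinedBy 0 n).memLp 2).const_mul _) fun δ hδ => ?_
  obtain ⟨r, hr⟩ := hΦ.exists_eventually_variance_blockError_le hμ hinv hδ
  obtain ⟨v, hv⟩ := hΦ.hasGaussianLimit_sum_blocks hd hμ hinv r
  refine ⟨_, v, hv, hr.mono fun n hn => ?_⟩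
  rw [← Real.sq_sqrt (show 0 ≤ (2 * (n : ℝ)) ^ d by positivity), ← inv_pow,
    ← variance_const_mul] at hn
  convert hn using 2
  funext A
  simp only [Pi.sub_apply, blockError]
  ring

end IsBoxFunctional

end BlockApproximation

/-! ### Faces of elementary cubes -/

section Faces

variable {d : ℕ} {Q R S : ElemCube d}

/-- The corner of an elementary cube with the largest coordinates. -/
def upperCorner (Q : ElemCube d) : Fin d → ℤ := fun i => (Q i).1 + if (Q i).2 then 1 else 0

/-- `R` is a face of `Q`, that is, `cubeSet R ⊆ cubeSet Q`, in terms of integer coordinates. -/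
def IsFace (R Q : ElemCube d) : Prop :=
  ∀ i, corner Q i ≤ corner R i ∧ upperCorner R i ≤ upperCorner Q i

lemma IsFace.refl (Q : ElemCube d) : IsFace Q Q := fun _ => ⟨le_rfl, le_rfl⟩

lemma corner_le_upperCorner (Q : ElemCube d) (i : Fin d) : corner Q i ≤ upperCorner Q i := by
  simp only [corner, upperCorner]
  split_ifs <;> simp

lemma upperCorner_le_corner_add_one (Q : ElemCube d) (i : Fin d) :
    upperCorner Q i ≤ corner Q i + 1 := by
  simp only [corner, upperCorner]
  split_ifs <;> simp

lemma cubeSet_eq_Icc (Q : ElemCube d) :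
    cubeSet Q = Set.Icc (fun i => (corner Q i : ℝ)) (fun i => (upperCorner Q i : ℝ)) := by
  ext x
  simp only [cubeSet, Set.mem_ofPred_eq, Set.mem_Icc, Pi.le_def, ← forall_and, corner, upperCorner]
  push_cast
  rfl

lemma cubeSet_subset_Icc_iff {a b : Fin d → ℝ} :
    cubeSet Q ⊆ Set.Icc a b ↔ ∀ i, a i ≤ corner Q i ∧ (upperCorner Q i : ℝ) ≤ b i := by
  rw [cubeSet_eq_Icc, Set.Icc_subset_Icc_iff fun i => Int.cast_le.2 (corner_le_upperCorner Q i),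
    Pi.le_def, Pi.le_def, forall_and]

lemma cubeSet_subset_cubeSet_iff : cubeSet R ⊆ cubeSet Q ↔ IsFace R Q := by
  rw [cubeSet_eq_Icc Q, cubeSet_subset_Icc_iff]
  exact_mod_cast Iff.rfl

lemma exists_mem_cubeSet_forall_isFace (R : ElemCube d) :
    ∃ x ∈ cubeSet R, ∀ Q, x ∈ cubeSet Q → IsFace R Q := by
  have hle (i : Fin d) : (corner R i : ℝ) ≤ upperCorner R i :=
    Int.cast_le.2 (corner_le_upperCorner R i)
  refine ⟨fun i => (corner R i + upperCorner R i : ℝ) / 2, ?_, fun Q hQ i => ?_⟩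
  · rw [cubeSet_eq_Icc]
    exact ⟨fun i => by linarith [hle i], fun i => by linarith [hle i]⟩
  · rw [cubeSet_eq_Icc] at hQ
    have hlower : (2 * corner Q i : ℝ) ≤ corner R i + upperCorner R i :=
      (le_div_iff₀' two_pos).1 (hQ.1 i)
    have hupper : (corner R i + upperCorner R i : ℝ) ≤ 2 * upperCorner Q i :=
      (div_le_iff₀' two_pos).1 (hQ.2 i)
    norm_cast at hlower hupper
    have := corner_le_upperCorner R i
    have := upperCorner_le_corner_add_one R i
    omega

/-- The cubes of the cubical complex generated by the cubes in `A`. -/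
def faceClosure (A : Set (ElemCube d)) : Set (ElemCube d) := {R | ∃ Q ∈ A, IsFace R Q}

lemma faceClosure_union (A B : Set (ElemCube d)) :
    faceClosure (A ∪ B) = faceClosure A ∪ faceClosure B := by
  ext R
  simp only [faceClosure, Set.mem_ofPred_eq, Set.mem_union, or_and_right, exists_or]

lemma cubeSet_subset_biUnion_iff {A : Set (ElemCube d)} :
    cubeSet R ⊆ ⋃ Q ∈ A, cubeSet Q ↔ R ∈ faceClosure A := by
  constructor
  · intro h
    obtain ⟨x, hx, hface⟩ := exists_mem_cubeSet_forall_isFace R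
    obtain ⟨Q, hQ, hxQ⟩ := Set.mem_iUnion₂.1 (h hx)
    exact ⟨Q, hQ, hface Q hxQ⟩
  · rintro ⟨Q, hQ, hface⟩
    exact (cubeSet_subset_cubeSet_iff.2 hface).trans (Set.subset_biUnion_of_mem hQ)

lemma corner_translateCube (x : Fin d → ℤ) (Q : ElemCube d) :
    corner (translateCube x Q) = corner Q + x := rfl

lemma upperCorner_translateCube (x : Fin d → ℤ) (Q : ElemCube d) :
    upperCorner (translateCube x Q) = upperCorner Q + x := by
  funext i
  exact add_right_comm _ _ _

lemma isFace_translateCube_iff (x : Fin d → ℤ) :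
    IsFace (translateCube x R) (translateCube x Q) ↔ IsFace R Q := by
  simp only [IsFace, corner_translateCube, upperCorner_translateCube, Pi.add_apply,
    add_le_add_iff_right]

lemma isFace_cons_cons_iff {a b : ℤ × Bool} :
    IsFace (Fin.cons a R : ElemCube (d + 1)) (Fin.cons b Q) ↔
      (b.1 ≤ a.1 ∧ a.1 + (if a.2 then 1 else 0) ≤ b.1 + if b.2 then 1 else 0) ∧ IsFace R Q := by
  simp only [IsFace, corner, upperCorner, Fin.forall_fin_succ, Fin.cons_zero, Fin.cons_succ]

lemma cubeDim_cons (a : ℤ × Bool) (R : ElemCube d) :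
    cubeDim (Fin.cons a R : ElemCube (d + 1)) = (if a.2 then 1 else 0) + cubeDim R := by
  simp only [cubeDim, Finset.card_filter, Fin.sum_univ_succ, Fin.cons_zero, Fin.cons_succ]

end Faces

/-! ### The boundary operator -/

section Boundary

variable {d : ℕ}

/-- The cubical product `a ⋄ c` of an elementary interval and a chain. -/
def consChain (a : ℤ × Bool) : CubChain d →ₗ[ℤ] CubChain (d + 1) :=
  Finsupp.lmapDomain ℤ ℤ fun R : ElemCube d => (Fin.cons a R : ElemCube (d + 1))

lemma consChain_single (a : ℤ × Bool) (R : ElemCube d) (n : ℤ) :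
    consChain a (Finsupp.single R n) = Finsupp.single (Fin.cons a R : ElemCube (d + 1)) n :=
  Finsupp.mapDomain_single

lemma boundaryHom_single (Q : ElemCube d) (n : ℤ) :
    boundaryHom d (Finsupp.single Q n) = n • boundaryCube d Q := by
  simp [boundaryHom]

lemma boundaryCube_cons (a : ℤ × Bool) (Q : ElemCube d) :
    boundaryCube (d + 1) (Fin.cons a Q) =
      (if a.2 then Finsupp.single (Fin.cons (a.1 + 1, false) Q) 1 -
        Finsupp.single (Fin.cons (a.1, false) Q) 1 else 0) +
      (if a.2 then (-1 : ℤ) else 1) • consChain a (boundaryCube d Q) := rfl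

lemma boundaryHom_consChain (a : ℤ × Bool) (c : CubChain d) :
    boundaryHom (d + 1) (consChain a c) =
      (if a.2 then consChain (a.1 + 1, false) c - consChain (a.1, false) c else 0) +
      (if a.2 then (-1 : ℤ) else 1) • consChain a (boundaryHom d c) := by
  induction c using Finsupp.induction_linear with
  | zero => simp
  | add c c' hc hc' =>
    rw [map_add, map_add, hc, hc']
    split_ifs <;> simp only [map_add, smul_add] <;> abel
  | single R n =>
    rw [consChain_single, boundaryHom_single, boundaryCube_cons, boundaryHom_single]
    split_ifs <;> simp [consChain_single, smul_sub]

lemma boundaryHom_boundaryHom (c : CubChain d) : boundaryHom d (boundaryHom d c) = 0 := by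
  induction d with
  | zero =>
    induction c using Finsupp.induction_linear <;> simp_all [boundaryHom_single, boundaryCube]
  | succ d ih =>
    induction c using Finsupp.induction_linear with
    | zero => simp
    | add c c' hc hc' => rw [map_add, map_add, hc, hc', add_zero]
    | single Q n =>
      induction Q using Fin.consCases with
      | cons a Q =>
        rw [← consChain_single, boundaryHom_consChain]
        split_ifs with ha <;> simp [boundaryHom_consChain, ha, ih]

lemma boundaryCube_mem_supported (Q : ElemCube d) :
    boundaryCube d Q ∈ Finsupp.supported ℤ ℤ {R | cubeDim R + 1 = cubeDim Q ∧ IsFace R Q} := by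
  induction d with
  | zero => exact zero_mem _
  | succ d ih =>
    induction Q using Fin.consCases with
    | cons a Q =>
      rw [boundaryCube_cons]
      refine add_mem ?_ (Submodule.smul_mem _ _ ?_)
      · split_ifs with ha
        · refine sub_mem (Finsupp.single_mem_supported _ _ ?_)
            (Finsupp.single_mem_supported _ _ ?_) <;>
          simp [cubeDim_cons, isFace_cons_cons_iff, ha, add_comm, IsFace.refl]
        · exact zero_mem _
      · have hcons := Submodule.mem_map_of_mem (f := consChain a) (ih Q)
        rw [consChain, Finsupp.lmapDomain_supported] at hcons
        refine Finsupp.supported_mono (Set.image_subset_iff.2 fun R hR => ?_) hcons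
        simpa [cubeDim_cons, isFace_cons_cons_iff, add_assoc] using hR

lemma translateCube_cons (y : ℤ) (x : Fin d → ℤ) (a : ℤ × Bool) (R : ElemCube d) :
    translateCube (Fin.cons y x : Fin (d + 1) → ℤ) (Fin.cons a R : ElemCube (d + 1)) =
      Fin.cons (a.1 + y, a.2) (translateCube x R) := by
  funext i
  refine Fin.cases ?_ (fun j => ?_) i <;> simp [translateCube]

lemma mapDomain_translateCube_consChain (y : ℤ) (x : Fin d → ℤ) (a : ℤ × Bool) (c : CubChain d) :
    Finsupp.mapDomain (translateCube (Fin.cons y x : Fin (d + 1) → ℤ)) (consChain a c) =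
      consChain (a.1 + y, a.2) (Finsupp.mapDomain (translateCube x) c) := by
  simp only [consChain, Finsupp.lmapDomain_apply, ← Finsupp.mapDomain_comp]
  exact congrArg (Finsupp.mapDomain · c) (funext fun R => translateCube_cons y x a R)

lemma boundaryCube_translateCube (x : Fin d → ℤ) (Q : ElemCube d) :
    boundaryCube d (translateCube x Q) =
      Finsupp.mapDomain (translateCube x) (boundaryCube d Q) := by
  induction d with
  | zero => simp [boundaryCube]
  | succ d ih =>
    induction x using Fin.consCases with
    | cons y x =>
      induction Q using Fin.consCases with
      | cons a Q =>
        rw [translateCube_cons, boundaryCube_cons, boundaryCube_cons, Finsupp.mapDomain_add,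
          Finsupp.mapDomain_smul, mapDomain_translateCube_consChain, ih]
        split_ifs <;> simp [sub_eq_add_neg, ← Finsupp.single_neg, Finsupp.mapDomain_add,
          Finsupp.mapDomain_single, translateCube_cons, add_right_comm]

end Boundary

/-! ### Betti numbers as alternating sums of ranks -/

section SpanRank

variable {ι R M : Type*} [CommRing R] [IsDomain R] [AddCommGroup M] [Module R M]
  {v : ι → M} {S T : Set ι}

/-- The rank of the family `v` restricted to the index set `S`. -/
def spanRank (R : Type*) {ι M : Type*} [CommRing R] [AddCommGroup M] [Module R M] (v : ι → M)
    (S : Set ι) : ℕ :=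
  Module.finrank R (Submodule.span R (v '' S))

lemma spanRank_mono (hT : T.Finite) (hST : S ⊆ T) : spanRank R v S ≤ spanRank R v T :=
  have := Module.Finite.span_of_finite R (hT.image v)
  Submodule.finrank_mono (Submodule.span_mono (Set.image_mono hST))

lemma spanRank_le_ncard (hS : S.Finite) : spanRank R v S ≤ S.ncard := by
  have := (hS.image v).fintype
  calc spanRank R v S ≤ (v '' S).toFinset.card := finrank_span_le_card _
    _ = (v '' S).ncard := (Set.ncard_eq_toFinset_card' _).symm
    _ ≤ S.ncard := Set.ncard_image_le hS

lemma finrank_quotient_comap_subtype_add {p p' : Submodule R M} (h : p ≤ p') [Module.Finite R p'] :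
    Module.finrank R (p' ⧸ p.comap p'.subtype) + Module.finrank R p = Module.finrank R p' := by
  rw [← Submodule.finrank_quotient_add_finrank (p.comap p'.subtype),
    (Submodule.comapSubtypeEquivOfLe h).finrank_eq]

lemma finrank_map_add_finrank_inf_ker {N : Type*} [AddCommGroup N] [Module R N] (f : M →ₗ[R] N)
    (p : Submodule R M) [Module.Finite R p] :
    Module.finrank R (p.map f) + Module.finrank R (p ⊓ LinearMap.ker f : Submodule R M) =
      Module.finrank R p := by
  rw [← Submodule.finrank_quotient_add_finrank (LinearMap.ker (f.domRestrict p)),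
    (LinearMap.quotKerEquivRange (f.domRestrict p)).finrank_eq, LinearMap.range_domRestrict,
    LinearMap.ker_domRestrict, ← Submodule.finrank_map_subtype_eq p, Submodule.map_comap_subtype]

variable [IsNoetherianRing R]

lemma finrank_sup_add_finrank_inf_eq (p p' : Submodule R M) [Module.Finite R p]
    [Module.Finite R p'] :
    Module.finrank R (p ⊔ p' : Submodule R M) + Module.finrank R (p ⊓ p' : Submodule R M) =
      Module.finrank R p + Module.finrank R p' := by
  have := Module.Finite.of_injective (Submodule.inclusion (inf_le_left : p ⊓ p' ≤ p))
    (Submodule.inclusion_injective _)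
  have hrank := Submodule.rank_sup_add_rank_inf_eq p p'
  simp only [← Module.finrank_eq_rank] at hrank
  exact_mod_cast hrank

lemma spanRank_union_add_spanRank_inter_le (hS : S.Finite) (hT : T.Finite) :
    spanRank R v (S ∪ T) + spanRank R v (S ∩ T) ≤ spanRank R v S + spanRank R v T := by
  have := Module.Finite.span_of_finite R (hS.image v)
  have := Module.Finite.span_of_finite R (hT.image v)
  have hinter : Submodule.span R (v '' (S ∩ T)) ≤
      Submodule.span R (v '' S) ⊓ Submodule.span R (v '' T) :=
    le_inf (Submodule.span_mono (Set.image_mono Set.inter_subset_left))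
      (Submodule.span_mono (Set.image_mono Set.inter_subset_right))
  have := Module.Finite.of_injective (Submodule.inclusion
    (inf_le_left : Submodule.span R (v '' S) ⊓ Submodule.span R (v '' T) ≤ _))
    (Submodule.inclusion_injective _)
  simp only [spanRank]
  rw [← finrank_sup_add_finrank_inf_eq (Submodule.span R (v '' S)), Set.image_union,
    Submodule.span_union]
  exact Nat.add_le_add_left (Submodule.finrank_mono hinter) _

lemma spanRank_union_le (hS : S.Finite) (hT : T.Finite) :
    spanRank R v (S ∪ T) ≤ spanRank R v S + T.ncard :=
  (Nat.le_add_right _ _).trans <| (spanRank_union_add_spanRank_inter_le hS hT).trans <|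
    Nat.add_le_add_left (spanRank_le_ncard hT) _

end SpanRank

section Betti

variable {d : ℕ} {S T : Set (ElemCube d)} {X : Set (Fin d → ℝ)}

/-- The `k`-dimensional cubes in `S`. -/
def cubesOfDim (k : ℕ) (S : Set (ElemCube d)) : Set (ElemCube d) := S ∩ {Q | cubeDim Q = k}

/-- The elementary cubes contained in `X`. -/
def cubesIn (X : Set (Fin d → ℝ)) : Set (ElemCube d) := {Q | cubeSet Q ⊆ X}

/-- The Betti number of a cubical complex `S`, as the number of `q`-cubes minus the ranks of
`∂_q` and `∂_{q+1}`. Real-valued, and defined for sets of cubes that are not closed under faces. -/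
def bettiOfCubes (q : ℕ) (S : Set (ElemCube d)) : ℝ :=
  (cubesOfDim q S).ncard - spanRank ℤ (boundaryCube d) (cubesOfDim q S) -
    spanRank ℤ (boundaryCube d) (cubesOfDim (q + 1) S)

lemma cubesOfDim_union (k : ℕ) (S T : Set (ElemCube d)) :
    cubesOfDim k (S ∪ T) = cubesOfDim k S ∪ cubesOfDim k T :=
  Set.union_inter_distrib_right _ _ _

lemma cubesOfDim_inter (k : ℕ) (S T : Set (ElemCube d)) :
    cubesOfDim k (S ∩ T) = cubesOfDim k S ∩ cubesOfDim k T :=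
  Set.inter_inter_distrib_right _ _ _

lemma bettiOfCubes_add_le (q : ℕ) (hS : S.Finite) (hT : T.Finite) :
    bettiOfCubes q S + bettiOfCubes q T ≤ bettiOfCubes q (S ∪ T) + bettiOfCubes q (S ∩ T) := by
  have hS' (k : ℕ) : (cubesOfDim k S).Finite := hS.inter_of_left _
  have hT' (k : ℕ) : (cubesOfDim k T).Finite := hT.inter_of_left _
  have hcard := Set.ncard_union_add_ncard_inter _ _ (hS' q) (hT' q)
  have hrank (k : ℕ) := spanRank_union_add_spanRank_inter_le (R := ℤ) (v := boundaryCube d)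
    (hS' k) (hT' k)
  have hrank₀ := hrank q
  have hrank₁ := hrank (q + 1)
  simp only [bettiOfCubes, cubesOfDim_union, cubesOfDim_inter]
  rify at hcard hrank₀ hrank₁
  linarith

lemma abs_bettiOfCubes_union_sub_le (q : ℕ) (hS : S.Finite) (hT : T.Finite) :
    |bettiOfCubes q (S ∪ T) - bettiOfCubes q S| ≤ 2 * T.ncard := by
  have hS' (k : ℕ) : (cubesOfDim k S).Finite := hS.inter_of_left _
  have hT' (k : ℕ) : (cubesOfDim k T).Finite := hT.inter_of_left _
  have hT_le (k : ℕ) : (cubesOfDim k T).ncard ≤ T.ncard :=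
    Set.ncard_le_ncard Set.inter_subset_left hT
  have hrank_le (k : ℕ) := (spanRank_union_le (R := ℤ) (v := boundaryCube d) (hS' k) (hT' k)).trans
    (Nat.add_le_add_left (hT_le k) _)
  have hrank_ge (k : ℕ) := spanRank_mono (R := ℤ) (v := boundaryCube d) ((hS' k).union (hT' k))
    Set.subset_union_left
  have hcard_le := (Set.ncard_union_le (cubesOfDim q S) (cubesOfDim q T)).trans
    (Nat.add_le_add_left (hT_le q) _)
  have hcard_ge := Set.ncard_le_ncard Set.subset_union_left ((hS' q).union (hT' q))
  have hrank_le₀ := hrank_le q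
  have hrank_le₁ := hrank_le (q + 1)
  have hrank_ge₀ := hrank_ge q
  have hrank_ge₁ := hrank_ge (q + 1)
  simp only [bettiOfCubes, cubesOfDim_union]
  rify at hcard_le hcard_ge hrank_le₀ hrank_le₁ hrank_ge₀ hrank_ge₁
  rw [abs_le]
  constructor <;> linarith

lemma cubesOfDim_image_translateCube (k : ℕ) (x : Fin d → ℤ) (S : Set (ElemCube d)) :
    cubesOfDim k (translateCube x '' S) = translateCube x '' cubesOfDim k S :=
  Set.image_inter_preimage _ _ _ |>.symm

lemma spanRank_image_translateCube (x : Fin d → ℤ) (S : Set (ElemCube d)) :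
    spanRank ℤ (boundaryCube d) (translateCube x '' S) = spanRank ℤ (boundaryCube d) S := by
  have himage : boundaryCube d '' (translateCube x '' S) =
      Finsupp.lmapDomain ℤ ℤ (translateCube x) '' (boundaryCube d '' S) := by
    rw [Set.image_image, Set.image_image]
    exact Set.image_congr fun Q _ => boundaryCube_translateCube x Q
  rw [spanRank, himage, Submodule.span_image]
  exact (Submodule.equivMapOfInjective _
    (Finsupp.mapDomain_injective (translateCube_injective x)) _).finrank_eq.symm

lemma bettiOfCubes_image_translateCube (q : ℕ) (x : Fin d → ℤ) (S : Set (ElemCube d)) :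
    bettiOfCubes q (translateCube x '' S) = bettiOfCubes q S := by
  simp only [bettiOfCubes, cubesOfDim_image_translateCube, spanRank_image_translateCube,
    Set.ncard_image_of_injective _ (translateCube_injective x)]

lemma chainsOn_eq_supported (k : ℕ) (X : Set (Fin d → ℝ)) :
    chainsOn d k X = Finsupp.supported ℤ ℤ (cubesOfDim k (cubesIn X)) :=
  congrArg _ (Set.inter_comm _ _)

lemma map_boundaryHom_chainsOn (k : ℕ) (X : Set (Fin d → ℝ)) :
    (chainsOn d k X).map (boundaryHom d) =
      Submodule.span ℤ (boundaryCube d '' cubesOfDim k (cubesIn X)) := by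
  rw [chainsOn_eq_supported, Finsupp.supported_eq_span_single, Submodule.map_span, Set.image_image]
  simp only [boundaryHom_single, one_smul]

lemma finite_chainsOn (k : ℕ) (hX : (cubesIn X).Finite) : Module.Finite ℤ (chainsOn d k X) := by
  rw [chainsOn_eq_supported, Finsupp.supported_eq_span_single]
  exact Module.Finite.span_of_finite ℤ ((hX.inter_of_left _).image _)

lemma finrank_chainsOn (k : ℕ) (hX : (cubesIn X).Finite) :
    Module.finrank ℤ (chainsOn d k X) = (cubesOfDim k (cubesIn X)).ncard := by
  have : Fintype (cubesOfDim k (cubesIn X)) := (hX.inter_of_left _).fintype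
  rw [chainsOn_eq_supported, (Finsupp.supportedEquivFinsupp (M := ℤ) (R := ℤ) _).finrank_eq,
    Module.finrank_finsupp_self, ← Nat.card_eq_fintype_card, Nat.card_coe_set_eq]

lemma boundaryMod_le_cycleMod (q : ℕ) (X : Set (Fin d → ℝ)) :
    boundaryMod d q X ≤ cycleMod d q X := by
  refine le_inf ?_ (Submodule.map_le_iff_le_comap.2 fun c _ => boundaryHom_boundaryHom c)
  rw [boundaryMod, map_boundaryHom_chainsOn, Submodule.span_le]
  rintro _ ⟨Q, ⟨hQX, hdim⟩, rfl⟩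
  rw [SetLike.mem_coe, chainsOn]
  refine Finsupp.supported_mono (fun R hR => ?_) (boundaryCube_mem_supported Q)
  exact ⟨Nat.succ_injective (hR.1.trans hdim), (cubeSet_subset_cubeSet_iff.2 hR.2).trans hQX⟩

theorem betti_eq_bettiOfCubes (q : ℕ) (hX : (cubesIn X).Finite) :
    (betti d q X : ℝ) = bettiOfCubes q (cubesIn X) := by
  have := finite_chainsOn q hX
  have : Module.Finite ℤ (cycleMod d q X) :=
    Module.Finite.of_injective (Submodule.inclusion inf_le_left) (Submodule.inclusion_injective _)
  have hcycle : spanRank ℤ (boundaryCube d) (cubesOfDim q (cubesIn X)) +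
      Module.finrank ℤ (cycleMod d q X) = (cubesOfDim q (cubesIn X)).ncard := by
    rw [spanRank, ← map_boundaryHom_chainsOn, ← finrank_chainsOn q hX]
    exact finrank_map_add_finrank_inf_ker (boundaryHom d) (chainsOn d q X)
  have hbetti : betti d q X + spanRank ℤ (boundaryCube d) (cubesOfDim (q + 1) (cubesIn X)) =
      Module.finrank ℤ (cycleMod d q X) := by
    rw [spanRank, ← map_boundaryHom_chainsOn]
    exact finrank_quotient_comap_subtype_add (boundaryMod_le_cycleMod q X)
  rw [bettiOfCubes, ← hcycle, ← hbetti]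
  push_cast
  ring

end Betti

/-! ### The Betti number of a window as a box functional -/

section LocalBetti

variable {d : ℕ} {c c' : Fin d → ℤ} {r r' : ℕ} {Q R : ElemCube d}

/-- The elementary cubes contained in the box of radius `r` around `c`. -/
def boxCubes (c : Fin d → ℤ) (r : ℕ) : Set (ElemCube d) :=
  {R | ∀ i, c i - r ≤ corner R i ∧ upperCorner R i ≤ c i + r}

/-- The `q`-th Betti number of the part, inside the box of radius `r` around `c`, of the cubical
complex generated by `A`. -/
def localBetti (q : ℕ) (c : Fin d → ℤ) (r : ℕ) (A : Set (ElemCube d)) : ℝ :=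
  bettiOfCubes q (boxCubes c r ∩ faceClosure A)

lemma mem_cubesMeeting_of_isFace (hR : R ∈ boxCubes c r) (hRQ : IsFace R Q) :
    Q ∈ cubesMeeting c r :=
  mem_cubesWithCorner.2 fun i => by
    have hlower := (hR i).1.trans ((corner_le_upperCorner R i).trans (hRQ i).2)
    have hupper := (hRQ i).1.trans ((corner_le_upperCorner R i).trans (hR i).2)
    exact ⟨sub_le_iff_le_add.2 (hlower.trans (upperCorner_le_corner_add_one Q i)), hupper⟩

lemma finite_boxCubes (c : Fin d → ℤ) (r : ℕ) : (boxCubes c r).Finite :=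
  (cubesMeeting c r).finite_toSet.subset fun R hR => mem_cubesMeeting_of_isFace hR (.refl R)

lemma boxCubes_subset_boxCubes (h : BoxSubset c r c' r') : boxCubes c r ⊆ boxCubes c' r' :=
  fun R hR i => by
    have := abs_le.1 (le_sub_iff_add_le.2 (h i))
    constructor <;> linarith [hR i]

lemma faceClosure_singleton_subset_boxCubes (h : BoxSubset (corner Q) 1 c r) :
    faceClosure {Q} ⊆ boxCubes c r := by
  rintro R ⟨Q, rfl, hRQ⟩ i
  have := abs_le.1 (le_sub_iff_add_le.2 (h i))
  have := upperCorner_le_corner_add_one Q i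
  push_cast at *
  constructor <;> linarith [hRQ i]

lemma faceClosure_insert (Q : ElemCube d) (A : Set (ElemCube d)) :
    faceClosure (insert Q A) = faceClosure (A \ {Q}) ∪ faceClosure {Q} := by
  rw [← faceClosure_union, Set.sdiff_union_self, Set.union_singleton]

lemma faceClosure_singleton_subset_cubesWithCorner (Q : ElemCube d) :
    faceClosure {Q} ⊆ (cubesWithCorner (corner Q) (corner Q + 1) : Set (ElemCube d)) := by
  rintro R ⟨_, rfl, hRQ⟩
  exact mem_cubesWithCorner.2 fun i => ⟨(hRQ i).1, (corner_le_upperCorner R i).trans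
    ((hRQ i).2.trans (upperCorner_le_corner_add_one _ i))⟩

lemma ncard_faceClosure_singleton_le (Q : ElemCube d) : (faceClosure {Q}).ncard ≤ 4 ^ d := by
  calc (faceClosure {Q}).ncard
      ≤ (cubesWithCorner (corner Q) (corner Q + 1) : Set (ElemCube d)).ncard :=
        Set.ncard_le_ncard (faceClosure_singleton_subset_cubesWithCorner Q) (Finset.finite_toSet _)
    _ = 4 ^ d := by
        rw [Set.ncard_coe_finset, card_cubesWithCorner (k := 2) fun i => ?_]
        simp only [Pi.add_apply, Pi.one_apply]
        push_cast
        ring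

lemma boxCubes_inter_faceClosure_image_translateCube (x c : Fin d → ℤ) (r : ℕ)
    (A : Set (ElemCube d)) :
    boxCubes (c + x) r ∩ faceClosure (translateCube x '' A) =
      translateCube x '' (boxCubes c r ∩ faceClosure A) := by
  have hbox (R : ElemCube d) : translateCube x R ∈ boxCubes (c + x) r ↔ R ∈ boxCubes c r := by
    simp only [boxCubes, Set.mem_ofPred_eq, corner_translateCube, upperCorner_translateCube,
      Pi.add_apply, add_sub_right_comm, add_right_comm _ (x _), add_le_add_iff_right]
  have hface (R : ElemCube d) :
      translateCube x R ∈ faceClosure (translateCube x '' A) ↔ R ∈ faceClosure A := by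
    simp only [faceClosure, Set.mem_ofPred_eq, Set.exists_mem_image, isFace_translateCube_iff]
  have hmem (R : ElemCube d) : translateCube x R ∈
      boxCubes (c + x) r ∩ faceClosure (translateCube x '' A) ↔ R ∈ boxCubes c r ∩ faceClosure A :=
    and_congr (hbox R) (hface R)
  ext S
  obtain ⟨R, rfl⟩ := (rightInverse_translateCube_neg x).surjective S
  rw [hmem, (translateCube_injective x).mem_set_image]

lemma determinedBy_localBetti (q : ℕ) (c : Fin d → ℤ) (r : ℕ) :
    DeterminedBy (localBetti q c r) (cubesMeeting c r : Set (ElemCube d)) := by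
  have hsub ⦃A B : Set (ElemCube d)⦄ (h : A ∩ cubesMeeting c r = B ∩ cubesMeeting c r) :
      boxCubes c r ∩ faceClosure A ⊆ boxCubes c r ∩ faceClosure B := by
    rintro R ⟨hR, Q, hQ, hRQ⟩
    exact ⟨hR, Q, (h.subset ⟨hQ, mem_cubesMeeting_of_isFace hR hRQ⟩).1, hRQ⟩
  exact fun A B h => congrArg (bettiOfCubes q) ((hsub h).antisymm (hsub h.symm))

lemma abs_discreteDeriv_localBetti_le (q : ℕ) (c : Fin d → ℤ) (r : ℕ) (Q : ElemCube d)
    (A : Set (ElemCube d)) : |discreteDeriv (localBetti q c r) Q A| ≤ 2 * 4 ^ d := by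
  have hcard : (boxCubes c r ∩ faceClosure {Q}).ncard ≤ 4 ^ d :=
    (Set.ncard_le_ncard Set.inter_subset_right ((Finset.finite_toSet _).subset
      (faceClosure_singleton_subset_cubesWithCorner Q))).trans (ncard_faceClosure_singleton_le Q)
  rw [discreteDeriv, localBetti, localBetti, faceClosure_insert, Set.inter_union_distrib_left]
  refine (abs_bettiOfCubes_union_sub_le q ((finite_boxCubes c r).inter_of_left _)
    ((finite_boxCubes c r).inter_of_left _)).trans ?_
  exact_mod_cast Nat.mul_le_mul_left 2 hcard

lemma discreteDeriv_localBetti_mono (q : ℕ) (hQ : BoxSubset (corner Q) 1 c r)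
    (h : BoxSubset c r c' r') (A : Set (ElemCube d)) :
    discreteDeriv (localBetti q c r) Q A ≤ discreteDeriv (localBetti q c' r') Q A := by
  have hfaces := faceClosure_singleton_subset_boxCubes hQ
  have hbox := boxCubes_subset_boxCubes h
  have hunion : boxCubes c' r' ∩ faceClosure (A \ {Q}) ∪ boxCubes c r ∩ faceClosure (insert Q A) =
      boxCubes c' r' ∩ faceClosure (insert Q A) := by
    rw [faceClosure_insert]
    grind
  have hinter : boxCubes c' r' ∩ faceClosure (A \ {Q}) ∩ (boxCubes c r ∩ faceClosure (insert Q A)) =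
      boxCubes c r ∩ faceClosure (A \ {Q}) := by
    rw [faceClosure_insert]
    grind
  have hsuper := bettiOfCubes_add_le q
    ((finite_boxCubes c' r').inter_of_left (faceClosure (A \ {Q})))
    ((finite_boxCubes c r).inter_of_left (faceClosure (insert Q A)))
  rw [hunion, hinter] at hsuper
  simp only [discreteDeriv, localBetti]
  linarith

theorem isBoxFunctional_localBetti (d q : ℕ) :
    IsBoxFunctional (d := d) (localBetti q) (2 * 4 ^ d) where
  determinedBy := determinedBy_localBetti q
  abs_discreteDeriv_le := abs_discreteDeriv_localBetti_le q
  discreteDeriv_mono := discreteDeriv_localBetti_mono q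
  translate x c r A := by
    rw [localBetti, boxCubes_inter_faceClosure_image_translateCube,
      bettiOfCubes_image_translateCube, localBetti]

end LocalBetti

/-! ### The random set of open cubes -/

section OpenCubes

variable {d : ℕ} {t : ℝ} {P : Measure (Config d)}

/-- The cubes of `K^d` that are present at time `t`. -/
def openCubes (t : ℝ) (ω : Config d) : Set (ElemCube d) := {Q | (ω Q : ℝ) ≤ t}

lemma cubesIn_cubSet_inter_lambda (t : ℝ) (n : ℕ) (ω : Config d) :
    cubesIn (cubSet ω t ∩ lambda d n) = boxCubes 0 n ∩ faceClosure (openCubes t ω) := by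
  have hlambda : lambda d n = Set.Icc (fun _ => -(n : ℝ)) (fun _ => (n : ℝ)) := by
    ext x
    simp only [lambda, Set.mem_ofPred_eq, Set.mem_Icc, Pi.le_def, forall_and]
  have hbox (R : ElemCube d) : cubeSet R ⊆ lambda d n ↔ R ∈ boxCubes 0 n := by
    simp only [hlambda, cubeSet_subset_Icc_iff, boxCubes, Set.mem_ofPred_eq, Pi.zero_apply,
      zero_sub, zero_add]
    exact_mod_cast Iff.rfl
  ext R
  exact Set.subset_inter_iff.trans
    (and_comm.trans (and_congr (hbox R) cubeSet_subset_biUnion_iff))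

lemma bettiN_eq_localBetti (q n : ℕ) (t : ℝ) (ω : Config d) :
    (bettiN d q n t ω : ℝ) = localBetti q 0 n (openCubes t ω) := by
  have hcubes := cubesIn_cubSet_inter_lambda t n ω
  rw [bettiN, betti_eq_bettiOfCubes q (hcubes ▸ (finite_boxCubes 0 n).inter_of_left _), hcubes,
    localBetti]

lemma image_translateCube (x : Fin d → ℤ) (A : Set (ElemCube d)) :
    translateCube x '' A = translateCube (-x) ⁻¹' A :=
  congrFun (Set.image_eq_preimage_of_inverse (leftInverse_translateCube_neg x)
    (rightInverse_translateCube_neg x)) A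

lemma openCubes_configShift (t : ℝ) (x : Fin d → ℤ) (ω : Config d) :
    openCubes t (configShift x ω) = translateCube x '' openCubes t ω :=
  (image_translateCube x (openCubes t ω)).symm

lemma measurable_coe_le (t : ℝ) : Measurable fun u : unitInterval => (u : ℝ) ≤ t :=
  measurableSet_setOfPred.1 (measurableSet_le measurable_subtype_coe measurable_const)

lemma measurable_openCubes (t : ℝ) : Measurable (openCubes (d := d) t) :=
  measurable_set_iff.2 fun Q => (measurable_coe_le t).comp (measurable_pi_apply Q)

lemma iIndepFun_map {ι Ω Ω' : Type*} {β : ι → Type*} [MeasurableSpace Ω] [MeasurableSpace Ω']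
    [∀ i, MeasurableSpace (β i)] {ν : Measure Ω'} {X : Ω' → Ω} {f : ∀ i, Ω → β i}
    (hX : Measurable X) (hf : ∀ i, Measurable (f i)) (h : iIndepFun (fun i ω => f i (X ω)) ν) :
    iIndepFun f (ν.map X) := by
  rw [iIndepFun_iff_measure_inter_preimage_eq_mul] at h ⊢
  intro S s hs
  have hmeas i (hi : i ∈ S) : MeasurableSet (f i ⁻¹' s i) := hf i (hs i hi)
  rw [Measure.map_apply hX (S.measurableSet_biInter hmeas), Set.preimage_iInter₂]
  refine (h S hs).trans (Finset.prod_congr rfl fun i hi => ?_)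
  rw [Measure.map_apply hX (hmeas i hi)]
  rfl

lemma iIndepFun_mem_map_openCubes (t : ℝ)
    (hprod : iIndepFun (fun (Q : ElemCube d) (ω : Config d) => ω Q) P) :
    iIndepFun (fun Q (A : Set (ElemCube d)) => Q ∈ A) (P.map (openCubes t)) :=
  iIndepFun_map (measurable_openCubes t) measurable_set_mem
    (hprod.comp (fun _ u => (u : ℝ) ≤ t) fun _ => measurable_coe_le t)

lemma measurable_configShift (x : Fin d → ℤ) : Measurable (configShift x) :=
  measurable_pi_iff.2 fun Q => measurable_pi_apply (translateCube (-x) Q)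

lemma measurable_image_translateCube (x : Fin d → ℤ) :
    Measurable fun A : Set (ElemCube d) => translateCube x '' A := by
  simp only [image_translateCube]
  exact measurable_set_iff.2 fun Q => measurable_set_mem (translateCube (-x) Q)

lemma measurePreserving_image_translateCube (t : ℝ) (hstat : Stationary P) (x : Fin d → ℤ) :
    MeasurePreserving (fun A => translateCube x '' A) (P.map (openCubes t))
      (P.map (openCubes t)) := by
  have hshift : P.map (configShift x) = P := Measure.ext fun A hA => by
    rw [Measure.map_apply (measurable_configShift x) hA, hstat x A hA]
  refine ⟨measurable_image_translateCube x, ?_⟩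
  calc (P.map (openCubes t)).map (fun A => translateCube x '' A)
      = P.map (fun ω => openCubes t (configShift x ω)) := by
        simp only [openCubes_configShift]
        exact Measure.map_map (measurable_image_translateCube x) (measurable_openCubes t)
    _ = (P.map (configShift x)).map (openCubes t) :=
        (Measure.map_map (measurable_openCubes t) (measurable_configShift x)).symm
    _ = P.map (openCubes t) := by rw [hshift]

theorem exists_hasGaussianLimit_bettiN [IsProbabilityMeasure P] (q : ℕ) (hd : 0 < d) (t : ℝ)
    (hstat : Stationary P) (hprod : iIndepFun (fun (Q : ElemCube d) (ω : Config d) => ω Q) P) :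
    ∃ v, HasGaussianLimit
      (fun n ω => (√((2 * (n : ℝ)) ^ d))⁻¹ * (bettiN d q n t ω : ℝ)) P v := by
  have : IsProbabilityMeasure (P.map (openCubes t)) :=
    Measure.isProbabilityMeasure_map (measurable_openCubes t).aemeasurable
  obtain ⟨v, hv⟩ := (isBoxFunctional_localBetti d q).exists_hasGaussianLimit hd
    (iIndepFun_mem_map_openCubes t hprod) (measurePreserving_image_translateCube t hstat)
  simp only [bettiN_eq_localBetti]
  exact ⟨v, hv.comp (measurable_openCubes t).aemeasurable⟩

end OpenCubes

/-- **CLT for Betti numbers.** Fix `0 ≤ q < d` and `t ∈ [0,1]`, and let `P` be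
a stationary product probability measure on `Ω = [0,1]^{K^d}` (the coordinates
`(ω_Q)_{Q ∈ K^d}` are independent under `P`). Then there is a constant `σ² ≥ 0`
(depending on `d`, `q`, `t`) such that, as `n → ∞`,
(i) `|Λ_n|⁻¹ E[(β_q^n(t) - E[β_q^n(t)])²] → σ²`, and
(ii) `|Λ_n|^{-1/2} (β_q^n(t) - E[β_q^n(t)])` converges in distribution to `N(0, σ²)`
(tested against bounded continuous functions). -/
theorem clt_betti (d q : ℕ) (hq : q < d) (t : ℝ) (ht : t ∈ Set.Icc (0 : ℝ) 1)
    (P : Measure (Config d)) [IsProbabilityMeasure P]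
    (hstat : Stationary P)
    (hprod : ProbabilityTheory.iIndepFun
      (fun (Q : ElemCube d) (ω : Config d) => ω Q) P) :
    ∃ σ2 : NNReal,
      Tendsto
          (fun n : ℕ => ((2 * (n : ℝ)) ^ d)⁻¹ *
            ∫ ω, ((bettiN d q n t ω : ℝ) - ∫ ω', (bettiN d q n t ω' : ℝ) ∂P) ^ 2 ∂P)
          atTop (𝓝 (σ2 : ℝ))
        ∧ ∀ g : BoundedContinuousFunction ℝ ℝ,
            Tendsto
              (fun n : ℕ => ∫ ω, g ((Real.sqrt ((2 * (n : ℝ)) ^ d))⁻¹ *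
                ((bettiN d q n t ω : ℝ) - ∫ ω', (bettiN d q n t ω' : ℝ) ∂P)) ∂P)
              atTop (𝓝 (∫ z, g z ∂(ProbabilityTheory.gaussianReal 0 σ2))) := by
  obtain ⟨v, hv⟩ := exists_hasGaussianLimit_bettiN q (q.zero_le.trans_lt hq) t hstat hprod
  refine ⟨v, hv.tendsto_variance.congr fun n => ?_, fun g => ?_⟩
  · rw [variance_eq_integral (hv.memLp n).aemeasurable, ← integral_const_mul]
    simp only [integral_const_mul, ← mul_sub, mul_pow, inv_pow]
    rw [Real.sq_sqrt (by positivity)]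
  · simpa only [integral_const_mul, ← mul_sub] using hv.tendsto_integral g

end
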